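/- Let T ∈ B_{(1^r)}(n,m) be a single-column lexicographic bitableau, and let (P,Q') = bRSK(T) (so P is semistandard of some shape λ ⊢ r with entries in [m] and Q' is semistandard of shape λ' with entries in [n]). For 1 ≤ i ≤ m−1, define F_i^b(T): apply the i-bracketing rule to w(T); if some letter i is unmatched, change the second coordinate of the box corresponding to the rightmost unmatched i from i to i+1 and re-sort the multiset of pairs into a strictly increasing column; otherwise undefined. For 1 ≤ j ≤ n−1, define F_j^t(T) analogously via the j-bracketing of u'(T), changing the first coordinate of the selected box from j to j+1 and re-sorting. Let f_i denote the standard tableau lowering operator on semistandard Young tableaux (i-bracketing of the row reading word, rows bottom to top, left to right within rows; change the rightmost unmatched i to i+1). Then F_i^b(T) is defined iff f_i(P) is defined, in which case F_i^b(T) ∈ B_{(1^r)}(n,m) and bRSK(F_i^b(T)) = (f_i(P), Q'); and F_j^t(T) is defined iff f_j(Q') is defined, in which case bRSK(F_j^t(T)) = (P, f_j(Q')). (Thus bRSK is an isomorphism of gl_n×gl_m-crystals on single-column bitableaux.) -/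

import Mathlib

/-- Lexicographic (weak) order on pairs: `(a,b) ≤ (a',b')` iff `a < a'`, or `a = a'` and `b ≤ b'`. -/
def lexLe (p q : ℕ × ℕ) : Prop := p.1 < q.1 ∨ (p.1 = q.1 ∧ p.2 ≤ q.2)

/-- Lexicographic strict order on pairs. -/
def lexLt (p q : ℕ × ℕ) : Prop := p.1 < q.1 ∨ (p.1 = q.1 ∧ p.2 < q.2)

instance : DecidableRel lexLe := fun p q =>
  inferInstanceAs (Decidable (p.1 < q.1 ∨ (p.1 = q.1 ∧ p.2 ≤ q.2)))

instance : DecidableRel lexLt := fun p q =>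
  inferInstanceAs (Decidable (p.1 < q.1 ∨ (p.1 = q.1 ∧ p.2 < q.2)))

/-- Row-insert the value `v` into the tableau `P` (a list of rows): `v` is appended at the end
of the first row if it is at least as large as every entry there; otherwise it replaces the
leftmost entry strictly larger than `v`, which is then inserted into the next row. -/
def insRow (v : ℕ) : List (List ℕ) → List (List ℕ)
  | [] => [[v]]
  | r :: rest =>
    match r.findIdx? (fun x => decide (v < x)) with
    | none => (r ++ [v]) :: rest
    | some idx => (r.set idx v) :: insRow (r.getD idx 0) rest

/-- The insertion tableau `P(w)` of a word: successively row-insert the letters of `w`,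
starting from the empty tableau. -/
def Pword (w : List ℕ) : List (List ℕ) :=
  w.foldl (fun t v => insRow v t) []

/-- The index of the row in which `p'` (the result of a row insertion into `p`) has one more
box than `p`. -/
def growIdx (p p' : List (List ℕ)) : ℕ :=
  (List.range p'.length).findIdx fun r => decide ((p.getD r []).length ≠ (p'.getD r []).length)

/-- Append the value `a` at the end of row `r` of the tableau `q`. -/
def addBox (q : List (List ℕ)) (r a : ℕ) : List (List ℕ) :=
  if r < q.length then q.set r (q.getD r [] ++ [a]) else q ++ [[a]]

/-- The RSK correspondence applied to a biword, given as a list of (top, bottom) pairs: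
the bottom entries are row-inserted in order to form the insertion tableau `P`, and the top
entries are recorded in the newly created boxes to form the recording tableau `Q`. -/
def rsk (w : List (ℕ × ℕ)) : List (List ℕ) × List (List ℕ) :=
  w.foldl (fun PQ ab =>
    let P' := insRow ab.2 PQ.1
    (P', addBox PQ.2 (growIdx PQ.1 P') ab.1)) ([], [])

/-- A word is Yamanouchi if for every `i ≥ 1`, every suffix contains at least as many letters
`i` as letters `i+1`. -/
def Yamanouchi (w : List ℕ) : Prop :=
  ∀ i : ℕ, 1 ≤ i → ∀ s ∈ w.tails, s.count (i + 1) ≤ s.count i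

/-- A one-row lexicographic bitableau in `B_{(r)}(n,m)`, encoded as its list of entries read
left to right: pairs in `{1,…,n} × {1,…,m}`, weakly increasing in lexicographic order. -/
def IsRowBitab (n m r : ℕ) (L : List (ℕ × ℕ)) : Prop :=
  L.length = r ∧ (∀ p ∈ L, (1 ≤ p.1 ∧ p.1 ≤ n) ∧ (1 ≤ p.2 ∧ p.2 ≤ m)) ∧ L.Chain' lexLe

/-- The sort-by-top reading word `w(T)` of a one-row bitableau: for `k = 1, …, n` in increasing
order, the second coordinates of the boxes with first coordinate `k`, read left to right. -/
def wRow (n : ℕ) (L : List (ℕ × ℕ)) : List ℕ :=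
  (List.range n).flatMap fun k => (L.filter fun p => decide (p.1 = k + 1)).map Prod.snd

/-- The reading word `u(T)` of a one-row bitableau: for `k = 1, …, m` in increasing order,
the first coordinates of the boxes with second coordinate `k`, read left to right. -/
def uRow (m : ℕ) (L : List (ℕ × ℕ)) : List ℕ :=
  (List.range m).flatMap fun k => (L.filter fun p => decide (p.2 = k + 1)).map Prod.fst

/-- A single-column lexicographic bitableau in `B_{(1^r)}(n,m)`, encoded as its list of entries
read top to bottom: pairs in `{1,…,n} × {1,…,m}`, strictly increasing in lexicographic order. -/
def IsColBitab (n m r : ℕ) (L : List (ℕ × ℕ)) : Prop :=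
  L.length = r ∧ (∀ p ∈ L, (1 ≤ p.1 ∧ p.1 ≤ n) ∧ (1 ≤ p.2 ∧ p.2 ≤ m)) ∧ L.Chain' lexLt

/-- The sort-by-top reading word `w(T)` of a single-column bitableau: for `k = 1, …, n` in
increasing order, the second coordinates of the boxes with first coordinate `k`, each group
read from the bottom of the column to the top. -/
def wCol (n : ℕ) (L : List (ℕ × ℕ)) : List ℕ :=
  (List.range n).flatMap fun k => ((L.filter fun p => decide (p.1 = k + 1)).reverse).map Prod.snd

/-- The reading word `u'(T)` of a single-column bitableau: for `k = m, m−1, …, 1` in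
decreasing order, the first coordinates of the boxes with second coordinate `k`, each group
read from the bottom of the column to the top. -/
def uCol' (m : ℕ) (L : List (ℕ × ℕ)) : List ℕ :=
  ((List.range m).reverse).flatMap fun k =>
    ((L.filter fun p => decide (p.2 = k + 1)).reverse).map Prod.fst

/-- The Burge word of a single-column bitableau: list the boxes grouped by first coordinate
`k = 1, …, n` in increasing order, within each group from the bottom of the column to the
top (so second coordinates strictly decrease within each group). -/
def burge (n : ℕ) (L : List (ℕ × ℕ)) : List (ℕ × ℕ) :=
  (List.range n).flatMap fun k => (L.filter fun p => decide (p.1 = k + 1)).reverse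

/-- The transpose of a tableau given as a list of rows: column `c` becomes row `c`. -/
def transposeT (q : List (List ℕ)) : List (List ℕ) :=
  (List.range (q.getD 0 []).length).map fun c => q.filterMap fun row => row[c]?

/-- The Burge insertion correspondence `bRSK` on a single-column bitableau: row-insert the
second coordinates of the Burge word in order to form `P`, record the first coordinates to
form the (row-strict) recording tableau `Q`, and output `(P, Qᵗ)`. -/
def bRSK (n : ℕ) (L : List (ℕ × ℕ)) : List (List ℕ) × List (List ℕ) :=
  ((rsk (burge n L)).1, transposeT (rsk (burge n L)).2)

/-- Under the `i`-bracketing rule (letter `i` becomes `)`, letter `i+1` becomes `(`, others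
ignored), the letter at position `p` of `w` is an unmatched `)` (letter `i`); equivalently,
every window of `w` ending at `p` contains strictly more letters `i` than letters `i+1`. -/
def unmatchedClose (w : List ℕ) (i p : ℕ) : Bool :=
  decide (p < w.length) && decide (w.getD p 0 = i) &&
    (List.range (p + 1)).all fun q =>
      decide (((w.drop q).take (p + 1 - q)).count (i + 1) < ((w.drop q).take (p + 1 - q)).count i)

/-- The position of the rightmost unmatched letter `i` of `w` under the `i`-bracketing rule,
if there is one. -/
def rightUnmatched (w : List ℕ) (i : ℕ) : Option ℕ :=
  (List.range w.length).reverse.find? (unmatchedClose w i)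

/-- Sort a list of pairs into lexicographically weakly increasing order. -/
def sortLex (L : List (ℕ × ℕ)) : List (ℕ × ℕ) := L.insertionSort lexLe

/-- The row reading word of a tableau (a list of rows): rows are read bottom to top, left to
right within each row. -/
def rowWord (P : List (List ℕ)) : List ℕ := P.reverse.flatMap id

/-- The boxes `(row, column)` of a tableau in row reading order (bottom to top, left to right
within each row). -/
def rowWordBoxes (P : List (List ℕ)) : List (ℕ × ℕ) :=
  (List.range P.length).reverse.flatMap fun r =>
    (List.range (P.getD r []).length).map fun c => (r, c)

/-- The standard lowering operator `f_i` on semistandard Young tableaux: apply the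
`i`-bracketing rule to the row reading word; if some letter `i` is unmatched, change the
rightmost unmatched `i` into `i+1` (in its box); otherwise undefined. -/
def fLower (i : ℕ) (P : List (List ℕ)) : Option (List (List ℕ)) :=
  match rightUnmatched (rowWord P) i with
  | none => none
  | some p =>
    let rc := (rowWordBoxes P).getD p (0, 0)
    some (P.set rc.1 ((P.getD rc.1 []).set rc.2 (i + 1)))

/-- Positions (indices into `L`) of the boxes of a single-column bitableau in the reading
order of `w(T)`. -/
def wColIdx (n : ℕ) (L : List (ℕ × ℕ)) : List ℕ :=
  (List.range n).flatMap fun k =>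
    ((List.range L.length).filter fun t => decide ((L.getD t (0, 0)).1 = k + 1)).reverse

/-- Positions (indices into `L`) of the boxes of a single-column bitableau in the reading
order of `u'(T)`. -/
def uColIdx' (m : ℕ) (L : List (ℕ × ℕ)) : List ℕ :=
  ((List.range m).reverse).flatMap fun k =>
    ((List.range L.length).filter fun t => decide ((L.getD t (0, 0)).2 = k + 1)).reverse

/-- The bottom lowering operator `F_i^b` on single-column bitableaux: apply the `i`-bracketing
rule to `w(T)`; if some letter `i` is unmatched, change the second coordinate of the box
corresponding to the rightmost unmatched `i` from `i` to `i+1` and re-sort the entries into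
a (strictly increasing) column; otherwise undefined. -/
def FbotCol (n i : ℕ) (L : List (ℕ × ℕ)) : Option (List (ℕ × ℕ)) :=
  match rightUnmatched (wCol n L) i with
  | none => none
  | some p =>
    let t := (wColIdx n L).getD p 0
    some (sortLex (L.set t ((L.getD t (0, 0)).1, i + 1)))

/-- The top lowering operator `F_j^t` on single-column bitableaux: apply the `j`-bracketing
rule to `u'(T)`; if some letter `j` is unmatched, change the first coordinate of the box
corresponding to the rightmost unmatched `j` from `j` to `j+1` and re-sort the entries into
a (strictly increasing) column; otherwise undefined. -/
def FtopCol (m j : ℕ) (L : List (ℕ × ℕ)) : Option (List (ℕ × ℕ)) :=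
  match rightUnmatched (uCol' m L) j with
  | none => none
  | some p =>
    let t := (uColIdx' m L).getD p 0
    some (sortLex (L.set t (j + 1, (L.getD t (0, 0)).2)))

/-!
The insertion tableau of a word is the only tableau whose reading word is Knuth equivalent to it:
lowering is injective and compatible with Knuth moves, and a tableau that cannot be lowered is
determined by its content, so that two Knuth equivalent reading words can be lowered together until
they agree. Hence `f_i` acts on insertion tableaux as it does on words.

It remains to recognise `Q'` as the insertion tableau of `u'(T)`. Lowering a letter of the Burge
word leaves the recording tableau unchanged; in `u'(T)` it moves a key between two neighbouring
decreasing columns, which is a Knuth equivalence. Both sides may thus be compared on Burge words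
whose bottom word cannot be lowered, where they are explicit. So `F_i^b` acts as `f_i` on `w(T)` and
as a Knuth equivalence on `u'(T)`, and the symmetry exchanging the coordinates turns `F_j^t` into
the same situation with the two words interchanged.
-/

namespace BurgeCrystal

/-! ### Bracketing of words -/

section Words

variable {a b e i x : ℕ} {u v w w₁ w₂ : List ℕ}

/-- Every prefix of `w` contains at most `e` more letters `a` than letters `b`. -/
def Ballot (a b e : ℕ) (w : List ℕ) : Prop :=
  ∀ u, u <+: w → u.count a ≤ u.count b + e

/-- No letter `i` of `w` is unmatched under the `i`-bracketing rule: `f_i` kills `w`. -/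
def IsLowest (i : ℕ) (w : List ℕ) : Prop := Ballot i (i + 1) 0 w

/-- No letter `i + 1` of `w` is unmatched under the `i`-bracketing rule: `e_i` kills `w`. -/
def IsHighest (i : ℕ) (w : List ℕ) : Prop := Ballot (i + 1) i 0 w.reverse

/-- The crystal lowering operator `f_i` on words, as a relation: the letter `i` that is changed
is the rightmost unmatched one, which is what the conditions on the two sides of it say. -/
inductive Lowers (i : ℕ) : List ℕ → List ℕ → Prop
  | mk {u v : List ℕ} (hu : IsHighest i u) (hv : IsLowest i v) :
      Lowers i (u ++ i :: v) (u ++ (i + 1) :: v)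

theorem ballot_nil : Ballot a b e [] := by
  intro u hu
  simp [List.prefix_nil.mp hu]

theorem Ballot.of_append (h : Ballot a b e (u ++ v)) : Ballot a b e u :=
  fun _ hs => h _ (hs.trans (List.prefix_append u v))

theorem Ballot.count_le (h : Ballot a b e w) : w.count a ≤ w.count b + e :=
  h w List.prefix_rfl

theorem ballot_append (a b e : ℕ) (u v : List ℕ) : Ballot a b e (u ++ v) ↔
    Ballot a b e u ∧ Ballot a b (u.count b + e - u.count a) v := by
  constructor
  · refine fun h => ⟨h.of_append, fun t ht => ?_⟩
    have := h (u ++ t) ((List.prefix_append_right_inj u).mpr ht)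
    simp only [List.count_append] at this
    omega
  · rintro ⟨hu, hv⟩ s hs
    rcases List.prefix_or_prefix_of_prefix hs (List.prefix_append u v) with h | ⟨t, rfl⟩
    · exact hu s h
    · have hu := hu.count_le
      have := hv t ((List.prefix_append_right_inj u).mp hs)
      simp only [List.count_append]
      omega

theorem ballot_singleton (hab : a ≠ b) : Ballot a b e [x] ↔ (x = a → 0 < e) := by
  constructor
  · rintro h rfl
    have := h.count_le
    simp only [List.count_singleton_self, List.count_singleton, beq_iff_eq, hab, if_false] at this
    omega
  · intro h s hs
    rcases List.prefix_cons_iff.mp hs with rfl | ⟨t, rfl, ht⟩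
    · simp
    · simp only [List.prefix_nil.mp ht, List.count_singleton]
      split_ifs <;> grind

theorem ballot_cons (hab : a ≠ b) : Ballot a b e (x :: w) ↔ (x = a → 0 < e) ∧
    Ballot a b ((if x = b then 1 else 0) + e - (if x = a then 1 else 0)) w := by
  rw [← List.singleton_append, ballot_append, ballot_singleton hab]
  simp [List.count_singleton]

theorem ballot_reverse_of_count_eq (h : Ballot a b 0 w) (hc : w.count a = w.count b) :
    Ballot b a 0 w.reverse := by
  intro s hs
  obtain ⟨t, ht⟩ := List.reverse_suffix.mpr hs
  rw [List.reverse_reverse] at ht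
  have := h t ⟨_, ht⟩
  simp only [← ht, List.count_append, List.count_reverse] at hc
  omega

/-- No letter `a` can be matched inside such a word. -/
theorem Ballot.count_le_of_pairwise (hab : a ≠ b) (h : Ballot a b e w)
    (hw : w.Pairwise fun x y => x = b → y ≠ a) : w.count a ≤ e := by
  induction w generalizing e with
  | nil => simp
  | cons x w ih =>
    obtain ⟨hxw, hw⟩ := List.pairwise_cons.mp hw
    obtain ⟨hx, h⟩ := (ballot_cons hab).mp h
    have hle := ih h hw
    have hzero : x = b → w.count a = 0 := fun hxb =>
      List.count_eq_zero.mpr fun ha => hxw a ha hxb rfl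
    simp only [List.count_cons, beq_iff_eq]
    split_ifs at hle ⊢ <;> grind

theorem isLowest_append : IsLowest i (u ++ v) ↔
    IsLowest i u ∧ Ballot i (i + 1) (u.count (i + 1) - u.count i) v := ballot_append ..

theorem isHighest_append : IsHighest i (u ++ v) ↔
    IsHighest i v ∧ Ballot (i + 1) i (v.count i - v.count (i + 1)) u.reverse := by
  simp only [IsHighest, List.reverse_append, ballot_append, List.count_reverse, Nat.add_zero]

theorem IsHighest.count_le (h : IsHighest i w) : w.count (i + 1) ≤ w.count i := by
  simpa using Ballot.count_le h

theorem IsHighest.of_suffix (h : IsHighest i (u ++ v)) : IsHighest i v :=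
  (isHighest_append.mp h).1

theorem Lowers.perm (h : Lowers i w w₁) : (i :: w₁).Perm ((i + 1) :: w) := by
  obtain ⟨-, -⟩ := h
  grind

theorem not_isLowest_of_isHighest (hu : IsHighest i u) (v : List ℕ) :
    ¬ IsLowest i (u ++ i :: v) := by
  intro hw
  have := (ballot_cons (by omega)).mp (isLowest_append.mp hw).2
  have := hu.count_le
  grind

theorem Lowers.not_isLowest (h : Lowers i w w₁) : ¬ IsLowest i w := by
  obtain ⟨hu, -⟩ := h
  exact not_isLowest_of_isHighest hu _

theorem isLowest_or_lowers (i : ℕ) (w : List ℕ) : IsLowest i w ∨ ∃ w', Lowers i w w' := by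
  induction w using List.reverseRecOn with
  | nil => exact .inl ballot_nil
  | append_singleton w x ih =>
    rcases ih with hw | ⟨_, @⟨u, v, hu, hv⟩⟩
    · by_cases hx : x = i ∧ w.count i = w.count (i + 1)
      · obtain ⟨rfl, hc⟩ := hx
        exact .inr ⟨_, ⟨ballot_reverse_of_count_eq hw hc, ballot_nil⟩⟩
      · have := hw.count_le
        exact .inl (isLowest_append.mpr ⟨hw, (ballot_singleton (by omega)).mpr (by grind)⟩)
    · rw [List.append_assoc, List.cons_append]
      by_cases hx : x = i ∧ v.count i = v.count (i + 1)
      · obtain ⟨rfl, hc⟩ := hx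
        have hv' : IsHighest x v := ballot_reverse_of_count_eq hv hc
        have hxv : IsHighest x (x :: v) := isHighest_append (u := [x]).mpr
          ⟨hv', (ballot_singleton (by omega)).mpr (by omega)⟩
        have huxv : IsHighest x (u ++ x :: v) :=
          isHighest_append.mpr ⟨hxv, fun s hs => (hu s hs).trans (by omega)⟩
        rw [← List.cons_append, ← List.append_assoc]
        exact .inr ⟨_, ⟨huxv, ballot_nil⟩⟩
      · have := hv.count_le
        refine .inr ⟨_, ⟨hu, isLowest_append.mpr ⟨hv, ?_⟩⟩⟩
        exact (ballot_singleton (by omega)).mpr (by grind)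

theorem Lowers.injective (h₁ : Lowers i w₁ w) (h₂ : Lowers i w₂ w) : w₁ = w₂ := by
  -- Two different positions would leave a segment between them that is both highest and lowest.
  have separate {u t v : List ℕ} (hu : IsHighest i (u ++ (i + 1) :: t))
      (hv : IsLowest i (t ++ v)) : False := by
    have := hu.of_suffix.count_le
    have := (isLowest_append.mp hv).1.count_le
    grind
  obtain ⟨hu₁, hv₁⟩ := h₁
  generalize hw : _ ++ (i + 1) :: _ = w at h₂
  obtain ⟨hu₂, hv₂⟩ := h₂
  rcases List.append_eq_append_iff.mp hw with ⟨t, rfl, ht⟩ | ⟨t, rfl, ht⟩ <;>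
    rcases List.cons_eq_append_iff.mp ht with ⟨rfl, _⟩ | ⟨t, rfl, rfl⟩
  · simp_all
  · exact (separate hu₂ hv₁).elim
  · simp_all
  · exact (separate hu₁ hv₂).elim

theorem isHighest_iff_drop :
    IsHighest i w ↔ ∀ q, (w.drop q).count (i + 1) ≤ (w.drop q).count i := by
  constructor
  · intro h q
    simpa using h _ (List.reverse_prefix.mpr (List.drop_suffix q w))
  · intro h s hs
    obtain ⟨q, hq⟩ : ∃ q, w.drop q = s.reverse :=
      ⟨_, (List.suffix_iff_eq_drop.mp (List.reverse_suffix.mpr hs |>.trans (by simp))).symm⟩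
    simpa [hq] using h q

theorem unmatchedClose_append_cons_iff :
    unmatchedClose (u ++ i :: v) i u.length ↔ IsHighest i u := by
  have window (q : ℕ) (hq : q < u.length + 1) :
      ((u ++ i :: v).drop q).take (u.length + 1 - q) = u.drop q ++ [i] := by
    rw [List.drop_append_of_le_length (by omega), List.take_append, List.length_drop,
      List.take_of_length_le (by rw [List.length_drop]; omega)]
    simp [show u.length + 1 - q - (u.length - q) = 1 by omega]
  simp only [unmatchedClose, isHighest_iff_drop, Bool.and_eq_true, List.all_eq_true,
    List.mem_range, decide_eq_true_eq]
  constructor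
  · intro h q
    rcases lt_or_ge q (u.length + 1) with hq | hq
    · have := h.2 q hq
      simp only [window q hq, List.count_append, List.count_singleton] at this
      grind
    · simp [List.drop_of_length_le (show u.length ≤ q by omega)]
  · refine fun h => ⟨by simp, fun q hq => ?_⟩
    have := h q
    simp only [window q hq, List.count_append, List.count_singleton]
    grind

theorem exists_split_of_unmatchedClose {p : ℕ} (h : unmatchedClose w i p) :
    ∃ u v, w = u ++ i :: v ∧ u.length = p ∧ IsHighest i u := by
  obtain ⟨hp, hi⟩ : p < w.length ∧ w.getD p 0 = i := by
    simp only [unmatchedClose, Bool.and_eq_true, decide_eq_true_eq] at h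
    exact h.1
  have hw : w = w.take p ++ i :: w.drop (p + 1) := by
    rw [← hi, List.getD_eq_getElem _ _ hp, List.cons_getElem_drop_succ, List.take_append_drop]
  have hlen : (w.take p).length = p := by simp [hp.le]
  generalize w.take p = u, w.drop (p + 1) = v at hw hlen
  subst hw hlen
  exact ⟨u, v, rfl, rfl, unmatchedClose_append_cons_iff.mp h⟩

theorem rightUnmatched_eq_none (h : IsLowest i w) : rightUnmatched w i = none := by
  refine List.find?_eq_none.mpr fun p _ hp => ?_
  obtain ⟨u, v, rfl, -, hu⟩ := exists_split_of_unmatchedClose hp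
  exact not_isLowest_of_isHighest hu v h

theorem rightUnmatched_eq_some (hu : IsHighest i u) (hv : IsLowest i v) :
    rightUnmatched (u ++ i :: v) i = some u.length := by
  rw [rightUnmatched, List.find?_eq_some_iff_append]
  refine ⟨unmatchedClose_append_cons_iff.mpr hu,
    (List.range' (u.length + 1) v.length).reverse, (List.range u.length).reverse, ?_, ?_⟩
  · rw [List.length_append, List.length_cons, ← Nat.add_assoc, Nat.add_right_comm, List.range_add,
      List.range_succ, List.range'_eq_map_range]
    simp
  · intro p hp
    rw [List.mem_reverse, List.mem_range'_1] at hp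
    refine Bool.not_eq_true' _ ▸ Bool.eq_false_iff.mpr fun hp' => ?_
    obtain ⟨u', v', h, rfl, hu'⟩ := exists_split_of_unmatchedClose hp'
    rcases List.append_eq_append_iff.mp h with ⟨t, rfl, ht⟩ | ⟨t, rfl, _⟩
    · rcases List.cons_eq_append_iff.mp ht with ⟨rfl, _⟩ | ⟨t, rfl, rfl⟩
      · simp at hp
      · have hu' : IsHighest i ((u ++ [i]) ++ t) := by simpa using hu'
        exact not_isLowest_of_isHighest hu'.of_suffix v' hv
    · simp at hp

end Words

/-! ### Knuth equivalence -/

section Knuth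

variable {α β : Type*} [LinearOrder α] [LinearOrder β] {w u v : List α}

/-- The elementary Knuth moves on three consecutive letters. -/
inductive KnuthTriple : List α → List α → Prop
  | yzx {x y z : α} (hxy : x < y) (hyz : y ≤ z) : KnuthTriple [y, z, x] [y, x, z]
  | xzy {x y z : α} (hxy : x ≤ y) (hyz : y < z) : KnuthTriple [x, z, y] [z, x, y]

/-- An elementary Knuth move performed inside a word. -/
inductive KnuthMove : List α → List α → Prop
  | mk (p s : List α) {t t' : List α} (h : KnuthTriple t t') :
      KnuthMove (p ++ t ++ s) (p ++ t' ++ s)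

/-- Knuth (plactic) equivalence of words over a linearly ordered alphabet. -/
def KnuthEquiv : List α → List α → Prop := Relation.EqvGen KnuthMove

namespace KnuthEquiv

theorem refl (w : List α) : KnuthEquiv w w := Relation.EqvGen.refl w

theorem symm (h : KnuthEquiv u v) : KnuthEquiv v u := Relation.EqvGen.symm _ _ h

theorem trans (huv : KnuthEquiv u v) (hvw : KnuthEquiv v w) : KnuthEquiv u w :=
  Relation.EqvGen.trans _ _ _ huv hvw

theorem of_triple (h : KnuthTriple u v) : KnuthEquiv u v :=
  .rel _ _ (by simpa using KnuthMove.mk [] [] h)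

theorem append_append (p s : List α) (h : KnuthEquiv u v) :
    KnuthEquiv (p ++ u ++ s) (p ++ v ++ s) := by
  induction h with
  | rel _ _ h =>
    obtain ⟨q, r, h⟩ := h
    have := KnuthMove.mk (p ++ q) (r ++ s) h
    exact .rel _ _ (by simpa only [List.append_assoc] using this)
  | refl => exact .refl _
  | symm _ _ _ ih => exact ih.symm
  | trans _ _ _ _ _ ih₁ ih₂ => exact ih₁.trans ih₂

theorem append_left (p : List α) (h : KnuthEquiv u v) : KnuthEquiv (p ++ u) (p ++ v) := by
  simpa using h.append_append p []

theorem append_right (h : KnuthEquiv u v) (s : List α) : KnuthEquiv (u ++ s) (v ++ s) :=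
  h.append_append [] s

/-- Reversing both the words and the alphabet exchanges the two elementary moves. -/
theorem reverse_map {f : α → β} (hf : StrictAnti f) (h : KnuthEquiv u v) :
    KnuthEquiv (u.reverse.map f) (v.reverse.map f) := by
  induction h with
  | rel _ _ h =>
    obtain ⟨p, s, h⟩ := h
    have in_context : ∀ {t t' : List β}, KnuthTriple t t' → KnuthEquiv
        (s.reverse.map f ++ t ++ p.reverse.map f) (s.reverse.map f ++ t' ++ p.reverse.map f) :=
      fun h => .rel _ _ (.mk _ _ h)
    cases h with
    | yzx hxy hyz => simpa using (in_context (.xzy (hf.antitone hyz) (hf hxy))).symm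
    | xzy hxy hyz => simpa using (in_context (.yzx (hf hyz) (hf.antitone hxy))).symm
  | refl => exact .refl _
  | symm _ _ _ ih => exact ih.symm
  | trans _ _ _ _ _ ih₁ ih₂ => exact ih₁.trans ih₂

theorem perm (h : KnuthEquiv u v) : u.Perm v := by
  induction h with
  | rel _ _ h =>
    obtain ⟨p, s, h⟩ := h
    refine (List.Perm.append_left p ?_).append_right s
    cases h with
    | yzx => exact (List.Perm.swap _ _ _).cons _
    | xzy => exact .swap _ _ _
  | refl => exact .refl _
  | symm _ _ _ ih => exact ih.symm
  | trans _ _ _ _ _ ih₁ ih₂ => exact ih₁.trans ih₂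

end KnuthEquiv

end Knuth

section KnuthLowering

variable {e i : ℕ} {p s t t' u v w w' w₁ : List ℕ}

theorem KnuthTriple.perm (h : KnuthTriple t t') : t.Perm t' := (KnuthEquiv.of_triple h).perm

theorem KnuthTriple.ballot_iff (h : KnuthTriple t t') :
    Ballot i (i + 1) e t ↔ Ballot i (i + 1) e t' := by
  cases h <;> simp only [ballot_cons (show i ≠ i + 1 by omega), ballot_nil, and_true] <;>
    split_ifs <;> omega

theorem KnuthTriple.ballot_reverse_iff (h : KnuthTriple t t') :
    Ballot (i + 1) i e t.reverse ↔ Ballot (i + 1) i e t'.reverse := by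
  cases h <;> simp only [List.reverse_cons, List.reverse_nil, List.nil_append, List.cons_append,
    ballot_cons (show i + 1 ≠ i by omega), ballot_nil, and_true] <;>
    split_ifs <;> omega

theorem KnuthMove.isLowest_iff (h : KnuthMove w w') : IsLowest i w ↔ IsLowest i w' := by
  obtain ⟨p, s, h⟩ := h
  simp only [IsLowest, ballot_append, List.count_append, h.ballot_iff, h.perm.count_eq]

theorem KnuthMove.isHighest_iff (h : KnuthMove w w') : IsHighest i w ↔ IsHighest i w' := by
  obtain ⟨p, s, h⟩ := h
  simp only [IsHighest, List.reverse_append, ballot_append, List.count_reverse,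
    h.ballot_reverse_iff, h.perm.count_eq]

theorem KnuthEquiv.isLowest_iff (h : KnuthEquiv w w') : IsLowest i w ↔ IsLowest i w' := by
  induction h with
  | rel _ _ h => exact h.isLowest_iff
  | refl => exact .rfl
  | symm _ _ _ ih => exact ih.symm
  | trans _ _ _ _ _ ih₁ ih₂ => exact ih₁.trans ih₂

theorem not_isHighest_append_succ : ¬ IsHighest i (u ++ [i + 1]) := by
  simp [IsHighest, ballot_cons]

theorem not_isLowest_cons_self : ¬ IsLowest i (i :: v) :=
  not_isLowest_of_isHighest (u := []) ballot_nil v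

theorem append_cons_eq_append {α : Type*} {x : α} {u v p s : List α} (h : u ++ x :: v = p ++ s) :
    (∃ v', p = u ++ x :: v' ∧ v = v' ++ s) ∨ ∃ u', u = p ++ u' ∧ s = u' ++ x :: v := by
  rcases List.append_eq_append_iff.mp h with ⟨t, rfl, ht⟩ | ⟨t, rfl, rfl⟩
  · rcases List.cons_eq_append_iff.mp ht with ⟨rfl, rfl⟩ | ⟨t, rfl, rfl⟩
    · exact .inr ⟨[], by simp, rfl⟩
    · exact .inl ⟨t, rfl, rfl⟩
  · exact .inr ⟨t, rfl, rfl⟩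

theorem append_cons_eq_triple {α : Type*} {x a b c : α} {u v : List α}
    (h : u ++ x :: v = [a, b, c]) : (u = [] ∧ x = a ∧ v = [b, c]) ∨
      (u = [a] ∧ x = b ∧ v = [c]) ∨ (u = [a, b] ∧ x = c ∧ v = []) := by
  rcases u with _ | ⟨_, _ | ⟨_, _ | ⟨_, u⟩⟩⟩ <;> simp_all

theorem exists_lowers_yzx {x y z : ℕ} {t₁ t₂ : List ℕ} (hxy : x < y) (hyz : y ≤ z)
    (ht : t₁ ++ i :: t₂ = [y, z, x])
    (hu : IsHighest i (p ++ t₁)) (hv : IsLowest i (t₂ ++ s)) :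
    ∃ t₁' t₂', [y, x, z] = t₁' ++ i :: t₂' ∧ IsHighest i (p ++ t₁') ∧ IsLowest i (t₂' ++ s) ∧
      KnuthEquiv (t₁ ++ (i + 1) :: t₂) (t₁' ++ (i + 1) :: t₂') := by
  rcases append_cons_eq_triple ht with ⟨rfl, rfl, rfl⟩ | ⟨rfl, rfl, rfl⟩ | ⟨rfl, rfl, rfl⟩
  · have hz : z ≠ i := by
      rintro rfl
      exact not_isLowest_cons_self hv
    refine ⟨[], [x, z], rfl, hu, ?_, .of_triple (.yzx (by omega) (by omega))⟩
    simpa [IsLowest, ballot_cons, show x ≠ i by omega, show x ≠ i + 1 by omega, hz] using hv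
  · refine ⟨[y, x], [], rfl, ?_, ?_, .of_triple (.yzx (by omega) (by omega))⟩
    · simpa [IsHighest, ballot_cons, show x ≠ i by omega, show x ≠ i + 1 by omega] using hu
    · simpa [IsLowest, ballot_cons, show x ≠ i by omega, show x ≠ i + 1 by omega] using hv
  · have hz : z ≠ i + 1 := by
      rintro rfl
      exact not_isHighest_append_succ (u := p ++ [y]) (by simpa using hu)
    have hu' : IsHighest i (p ++ [y]) := by
      simpa [IsHighest, ballot_cons, hz, show z ≠ i by omega] using hu
    have hy : y ≠ i + 1 := by
      rintro rfl
      exact not_isHighest_append_succ hu'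
    refine ⟨[y], [z], rfl, hu', ?_, .of_triple (.yzx (by omega) (by omega))⟩
    simpa [IsLowest, ballot_cons, show z ≠ i by omega, hz] using hv

/-- The lowered letter is the same one before and after the move, except that `i (i+1) i`, which
becomes `(i+1) i i`, is lowered in its first letter and then in its last one. -/
theorem exists_lowers_xzy {x y z : ℕ} {t₁ t₂ : List ℕ} (hxy : x ≤ y) (hyz : y < z)
    (ht : t₁ ++ i :: t₂ = [x, z, y])
    (hu : IsHighest i (p ++ t₁)) (hv : IsLowest i (t₂ ++ s)) :
    ∃ t₁' t₂', [z, x, y] = t₁' ++ i :: t₂' ∧ IsHighest i (p ++ t₁') ∧ IsLowest i (t₂' ++ s) ∧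
      KnuthEquiv (t₁ ++ (i + 1) :: t₂) (t₁' ++ (i + 1) :: t₂') := by
  rcases append_cons_eq_triple ht with ⟨rfl, rfl, rfl⟩ | ⟨rfl, rfl, rfl⟩ | ⟨rfl, rfl, rfl⟩
  · by_cases hz : z = i + 1
    · obtain rfl : y = i := by omega
      subst hz
      refine ⟨[y + 1, y], [], rfl, ?_, ?_, .of_triple (.yzx (by omega) le_rfl)⟩
      · simpa [IsHighest, ballot_cons] using hu
      · simpa [IsLowest, ballot_cons] using hv
    · have hy : y ≠ i := by
        rintro rfl
        simp [IsLowest, ballot_cons, show z ≠ y by omega, hz] at hv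
      refine ⟨[z], [y], rfl, ?_, ?_, .of_triple (.xzy (by omega) (by omega))⟩
      · simpa [IsHighest, ballot_cons, show z ≠ i by omega, hz] using hu
      · simpa [IsLowest, ballot_cons, show z ≠ i by omega, hz] using hv
  · refine ⟨[], [x, y], rfl, ?_, ?_, .of_triple (.xzy (by omega) (by omega))⟩
    · simpa [IsHighest, ballot_cons, show x ≠ i by omega, show x ≠ i + 1 by omega] using hu
    · simpa [IsLowest, ballot_cons, show x ≠ i by omega, show x ≠ i + 1 by omega,
        show y ≠ i by omega, show y ≠ i + 1 by omega] using hv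
  · have hz : z ≠ i + 1 := by
      rintro rfl
      exact not_isHighest_append_succ (u := p ++ [x]) (by simpa using hu)
    refine ⟨[z, x], [], rfl, ?_, hv, .of_triple (.xzy (by omega) (by omega))⟩
    simpa [IsHighest, ballot_cons, show z ≠ i by omega, hz] using hu

theorem KnuthTriple.exists_lowers {t₁ t₂ : List ℕ} (h : KnuthTriple (t₁ ++ i :: t₂) t')
    (hu : IsHighest i (p ++ t₁)) (hv : IsLowest i (t₂ ++ s)) :
    ∃ t₁' t₂', t' = t₁' ++ i :: t₂' ∧ IsHighest i (p ++ t₁') ∧ IsLowest i (t₂' ++ s) ∧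
      KnuthEquiv (t₁ ++ (i + 1) :: t₂) (t₁' ++ (i + 1) :: t₂') := by
  generalize ht : t₁ ++ i :: t₂ = t at h
  cases h with
  | yzx hxy hyz => exact exists_lowers_yzx hxy hyz ht hu hv
  | xzy hxy hyz => exact exists_lowers_xzy hxy hyz ht hu hv

theorem Lowers.unique {w₂ : List ℕ} (h₁ : Lowers i w w₁) (h₂ : Lowers i w w₂) : w₁ = w₂ := by
  obtain ⟨hu₁, hv₁⟩ := h₁
  generalize hw : _ ++ i :: _ = w at h₂
  obtain ⟨hu₂, hv₂⟩ := h₂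
  have hlen := (rightUnmatched_eq_some hu₁ hv₁).symm.trans
    (hw ▸ rightUnmatched_eq_some hu₂ hv₂)
  obtain ⟨rfl, h⟩ := List.append_inj hw (Option.some.inj hlen)
  rw [(List.cons.inj h).2]

theorem KnuthMove.exists_lowers (h : KnuthMove w w') (hw : Lowers i w w₁) :
    ∃ w₁', Lowers i w' w₁' ∧ KnuthEquiv w₁ w₁' := by
  obtain ⟨p, s, h⟩ := h
  generalize hpts : p ++ _ ++ s = w at hw
  obtain @⟨u₀, v₀, hu, hv⟩ := hw
  rw [List.append_assoc] at hpts
  rcases append_cons_eq_append hpts.symm with ⟨v, rfl, rfl⟩ | ⟨u', rfl, hts⟩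
  · have hm := KnuthMove.mk v s h
    rw [← List.append_assoc] at hv
    refine ⟨_, by simpa using Lowers.mk hu (hm.isLowest_iff.mp hv), ?_⟩
    simpa using (KnuthEquiv.of_triple h).append_append (u₀ ++ (i + 1) :: v) s
  · rcases append_cons_eq_append hts.symm with ⟨v, rfl, rfl⟩ | ⟨u, rfl, rfl⟩
    · obtain ⟨t₁, t₂, rfl, hu', hv', ht⟩ := h.exists_lowers hu hv
      exact ⟨_, by simpa using Lowers.mk hu' hv', by simpa using ht.append_append p s⟩
    · have hm := KnuthMove.mk p u h
      rw [← List.append_assoc] at hu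
      refine ⟨_, by simpa using Lowers.mk (hm.isHighest_iff.mp hu) hv, ?_⟩
      simpa using (KnuthEquiv.of_triple h).append_append p (u ++ (i + 1) :: v₀)

theorem KnuthEquiv.exists_lowers (h : KnuthEquiv w w') (hw : Lowers i w w₁) :
    ∃ w₁', Lowers i w' w₁' ∧ KnuthEquiv w₁ w₁' := by
  induction h generalizing w₁ with
  | rel _ _ h => exact h.exists_lowers hw
  | refl => exact ⟨w₁, hw, .refl _⟩
  | symm x y h ih =>
    have hx : ¬ IsLowest i x := fun hx => hw.not_isLowest (isLowest_iff h |>.mp hx)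
    obtain ⟨x₁, hx₁⟩ := (isLowest_or_lowers i x).resolve_left hx
    obtain ⟨y₁, hy₁, h₁⟩ := ih hx₁
    exact ⟨x₁, hx₁, hw.unique hy₁ ▸ h₁.symm⟩
  | trans _ _ _ _ _ ih₁ ih₂ =>
    obtain ⟨_, h₁, hk₁⟩ := ih₁ hw
    obtain ⟨_, h₂, hk₂⟩ := ih₂ h₁
    exact ⟨_, h₂, hk₁.trans hk₂⟩

end KnuthLowering

section Columns

variable {α : Type*} [LinearOrder α] {x y z x₁ x₂ y₁ y₂ : List α} {c : α}

theorem knuthEquiv_slide_of_lt (hx : x.Pairwise (· > ·)) (hy : y.Pairwise (· > ·))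
    (hcx : ∀ a ∈ x, c < a) (hxy : ∀ t, y.countP (· ≤ t) ≤ x.countP (· ≤ t)) :
    KnuthEquiv (x ++ c :: y) (x ++ y ++ [c]) := by
  induction y using List.reverseRecOn generalizing x c with
  | nil => simpa using KnuthEquiv.refl _
  | append_singleton y q ih =>
    obtain ⟨hy, -, hqy⟩ := List.pairwise_append.mp hy
    replace hqy : ∀ a ∈ y, q < a := fun a ha => hqy a ha q (by simp)
    rcases List.eq_nil_or_concat x with rfl | ⟨x, p, rfl⟩
    · simpa using hxy q
    rw [List.concat_eq_append] at hx hcx hxy ⊢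
    have hpx : ∀ a ∈ x, p < a := fun a ha => (List.pairwise_append.mp hx).2.2 a ha p (by simp)
    have hcp : c < p := hcx p (by simp)
    have hpq : p ≤ q := by
      by_contra! hqp
      have hzero : (x ++ [p]).countP (· ≤ q) = 0 := List.countP_eq_zero.mpr (by grind)
      have hq := hxy q
      rw [hzero] at hq
      simp at hq
    have hxy' : ∀ t, y.countP (· ≤ t) ≤ x.countP (· ≤ t) := by
      intro t
      by_cases hqt : q ≤ t
      · simpa [hqt, hpq.trans hqt] using hxy t
      · rw [List.countP_eq_zero.mpr (by grind)]
        exact Nat.zero_le _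
    have hc : KnuthEquiv (x ++ [p] ++ c :: y) (x ++ [p] ++ y ++ [c]) :=
      ih hx hy hcx fun t => (hxy' t).trans (by simp)
    have hp : KnuthEquiv (x ++ p :: y) (x ++ y ++ [p]) :=
      ih (List.pairwise_append.mp hx).1 hy hpx hxy'
    have hpcq : KnuthEquiv [p, c, q] [p, q, c] := .symm (.of_triple (.yzx hcp hpq))
    have h₁ := hc.append_right [q]
    have h₂ := hp.append_right [c, q]
    have h₃ := hpcq.append_left (x ++ y)
    have h₄ := hp.symm.append_right [q, c]
    simp only [List.append_assoc, List.cons_append, List.nil_append] at h₁ h₂ h₃ h₄ ⊢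
    exact h₁.trans (h₂.trans (h₃.trans h₄))

theorem knuthEquiv_slide_of_gt (hx : x.Pairwise (· > ·)) (hy : y.Pairwise (· > ·))
    (hcy : ∀ a ∈ y, a < c) (hxy : ∀ t, x.countP (t ≤ ·) ≤ y.countP (t ≤ ·)) :
    KnuthEquiv (c :: x ++ y) (x ++ c :: y) := by
  have h := knuthEquiv_slide_of_lt (c := OrderDual.toDual c)
    (x := y.reverse.map OrderDual.toDual) (y := x.reverse.map OrderDual.toDual)
    (by simpa [List.pairwise_reverse, List.pairwise_map] using hy)
    (by simpa [List.pairwise_reverse, List.pairwise_map] using hx)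
    (by simpa using hcy)
    (fun t => by
      simpa [List.countP_map, Function.comp_def, OrderDual.toDual_le] using
        hxy (OrderDual.ofDual t))
  simpa using (h.reverse_map (f := OrderDual.ofDual) fun _ _ => id).symm

theorem knuthEquiv_slide_column_of_lt (hxz : (x ++ z).Pairwise (· > ·)) (hy : y.Pairwise (· > ·))
    (hxy : ∀ t, y.countP (· ≤ t) ≤ x.countP (· ≤ t)) :
    KnuthEquiv (x ++ z ++ y) (x ++ y ++ z) := by
  induction z using List.reverseRecOn with
  | nil => simpa using KnuthEquiv.refl _
  | append_singleton z d ih =>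
    rw [← List.append_assoc] at hxz
    obtain ⟨hxz, -, hd⟩ := List.pairwise_append.mp hxz
    have hdxz := knuthEquiv_slide_of_lt (c := d) hxz hy (fun a ha => hd a ha d (by simp))
      fun t => (hxy t).trans (by simp)
    have := (ih hxz).append_right [d]
    simp only [List.append_assoc, List.cons_append, List.nil_append] at hdxz this ⊢
    exact hdxz.trans this

theorem knuthEquiv_move_between_columns (hx : (x₁ ++ c :: x₂).Pairwise (· > ·))
    (hy : (y₁ ++ c :: y₂).Pairwise (· > ·))
    (h₁ : ∀ t, y₁.countP (· ≤ t) ≤ x₁.countP (· ≤ t))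
    (h₂ : ∀ t, x₂.countP (t ≤ ·) ≤ y₂.countP (t ≤ ·)) :
    KnuthEquiv (x₁ ++ c :: x₂ ++ (y₁ ++ y₂)) (x₁ ++ x₂ ++ (y₁ ++ c :: y₂)) := by
  obtain ⟨hy₁, hcy₂, -⟩ := List.pairwise_append.mp hy
  obtain ⟨hc, hy₂⟩ := List.pairwise_cons.mp hcy₂
  have hx₂ : x₂.Pairwise (· > ·) := hx.sublist (by simp)
  have s₁ := (knuthEquiv_slide_column_of_lt hx hy₁ h₁).append_right y₂
  have s₂ := (knuthEquiv_slide_of_gt hx₂ hy₂ hc h₂).append_left (x₁ ++ y₁)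
  have hx₁₂ : (x₁ ++ x₂).Pairwise (· > ·) := hx.sublist (by simp)
  have s₃ := (knuthEquiv_slide_column_of_lt hx₁₂ hy₁ h₁).symm.append_right (c :: y₂)
  simp only [List.append_assoc, List.cons_append] at s₁ s₂ s₃ ⊢
  exact s₁.trans (s₂.trans s₃)

end Columns

/-! ### Row insertion and tableaux -/

section RowInsertion

variable {α : Type*} [LinearOrder α]

theorem knuthEquiv_bump {A C : List α} {b v : α} (hR : (A ++ b :: C).Pairwise (· ≤ ·))
    (hA : ∀ x ∈ A, x ≤ v) (hvb : v < b) : KnuthEquiv (A ++ b :: C ++ [v]) (b :: A ++ v :: C) := by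
  obtain ⟨hAA, hbC, -⟩ := List.pairwise_append.mp hR
  have hAv : (A ++ [v]).Pairwise (· ≤ ·) :=
    List.pairwise_append.mpr ⟨hAA, List.pairwise_singleton .., by simpa using hA⟩
  have left_of_row (b : α) (C : List α) (hbC : (b :: C).Pairwise (· ≤ ·)) (hvb : v < b) :
      KnuthEquiv (b :: C ++ [v]) ([b, v] ++ C) := by
    induction C generalizing b with
    | nil => exact .refl _
    | cons c C ih =>
      have hbc : b ≤ c := List.rel_of_pairwise_cons hbC (by simp)
      exact ((ih c hbC.of_cons (hvb.trans_le hbc)).append_left [b]).trans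
        ((KnuthEquiv.of_triple (.yzx hvb hbc)).append_right C)
  have right_of_row (A : List α) (hA : (A ++ [v]).Pairwise (· ≤ ·)) :
      KnuthEquiv (A ++ [b, v]) (b :: A ++ [v]) := by
    induction A with
    | nil => exact .refl _
    | cons a A ih =>
      obtain ⟨ha, hA⟩ := List.pairwise_cons.mp hA
      obtain ⟨y, s, hy⟩ :=
        List.exists_cons_of_ne_nil (List.append_ne_nil_of_right_ne_nil A (List.cons_ne_nil v []))
      have hyv : y ≤ v := by
        rcases List.mem_append.mp (show y ∈ A ++ [v] by simp [hy]) with h | h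
        · exact (List.pairwise_append.mp hA).2.2 y h v (by simp)
        · exact (List.mem_singleton.mp h).le
      refine ((ih hA).append_left [a]).trans ?_
      have := KnuthEquiv.of_triple (.xzy (ha y (by simp [hy])) (hyv.trans_lt hvb))
      simpa [hy] using this.append_right s
  have hleft := (left_of_row b C hbC hvb).append_left A
  have hright := (right_of_row A hAv).append_right C
  simpa using hleft.trans (by simpa using hright)

end RowInsertion

section Tableaux

variable {P : List (List ℕ)} {R A C : List ℕ} {b v : ℕ}

/-- Row `S` may stand directly below row `R` in a tableau: since rows are weakly increasing, the
columns are strictly increasing exactly when every `t` bounds at most as many entries of `S`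
weakly as it bounds entries of `R` strictly. -/
def StrictlyAbove (R S : List ℕ) : Prop := ∀ t, S.countP (· ≤ t) ≤ R.countP (· < t)

/-- A list of nonempty rows, from top to bottom, is a semistandard tableau. -/
def IsTableau : List (List ℕ) → Prop
  | [] => True
  | R :: P => R ≠ [] ∧ R.Pairwise (· ≤ ·) ∧ StrictlyAbove R (P.headD []) ∧ IsTableau P

theorem IsTableau.pairwise_headD (h : IsTableau P) : (P.headD []).Pairwise (· ≤ ·) := by
  cases P with
  | nil => exact .nil
  | cons R P => exact h.2.1

theorem rowWord_cons (R : List ℕ) (P : List (List ℕ)) : rowWord (R :: P) = rowWord P ++ R := by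
  simp [rowWord]

theorem insRow_of_forall_le (h : ∀ x ∈ R, x ≤ v) (P : List (List ℕ)) :
    insRow v (R :: P) = (R ++ [v]) :: P := by
  have : R.findIdx? (fun x => decide (v < x)) = none := by simpa using h
  simp only [insRow, this]

theorem insRow_of_lt (hA : ∀ x ∈ A, x ≤ v) (hvb : v < b) (P : List (List ℕ)) :
    insRow v ((A ++ b :: C) :: P) = (A ++ v :: C) :: insRow b P := by
  have : A.findIdx? (fun x => decide (v < x)) = none := by simpa using hA
  have : (A ++ b :: C).findIdx? (fun x => decide (v < x)) = some A.length := by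
    simp [List.findIdx?_append, List.findIdx?_cons, this, hvb]
  simp only [insRow, this]
  simp

theorem forall_le_or_exists_split (v : ℕ) (R : List ℕ) : (∀ x ∈ R, x ≤ v) ∨
    ∃ A b C, R = A ++ b :: C ∧ (∀ x ∈ A, x ≤ v) ∧ v < b := by
  cases hf : R.find? (v < ·) with
  | none => exact .inl (by simpa using hf)
  | some b =>
    obtain ⟨hvb, A, C, rfl, hA⟩ := List.find?_eq_some_iff_append.mp hf
    exact .inr ⟨A, b, C, rfl, by simpa using hA, by simpa using hvb⟩

theorem countP_headD_insRow_le (hP : (P.headD []).Pairwise (· ≤ ·)) (b t : ℕ) :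
    ((insRow b P).headD []).countP (· ≤ t) ≤ (P.headD []).countP (· ≤ t) ∨
    b ≤ t ∧ ((insRow b P).headD []).countP (· ≤ t) ≤ (P.headD []).countP (· ≤ b) + 1 := by
  cases P with
  | nil => simp only [insRow, List.headD_cons, List.countP_singleton]; grind
  | cons S P =>
    rcases forall_le_or_exists_split b S with hS | ⟨A, c, C, rfl, hA, hbc⟩
    · simp only [insRow_of_forall_le hS, List.headD_cons, List.countP_append, List.countP_singleton]
      have : S.countP (· ≤ b) = S.length := by simpa [List.countP_eq_length] using hS
      have := S.countP_le_length (p := (· ≤ t))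
      grind
    · simp only [insRow_of_lt hA hbc, List.headD_cons, List.countP_append, List.countP_cons,
        decide_eq_true_eq]
      by_cases hct : c ≤ t
      · simp only [hct, hbc.le.trans hct, if_true]
        omega
      have hC : C.countP (· ≤ t) = 0 := by
        have hcC := (List.pairwise_append.mp hP).2.1
        simp only [List.countP_eq_zero, decide_eq_true_eq]
        exact fun x hx => fun hxt => hct ((List.rel_of_pairwise_cons hcC hx).trans hxt)
      have : A.countP (· ≤ b) = A.length := by simpa [List.countP_eq_length] using hA
      have := A.countP_le_length (p := (· ≤ t))
      grind

theorem strictlyAbove_insRow (h : StrictlyAbove (A ++ b :: C) (P.headD []))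
    (hR : (A ++ b :: C).Pairwise (· ≤ ·)) (hvb : v < b)
    (hP : (P.headD []).Pairwise (· ≤ ·)) :
    StrictlyAbove (A ++ v :: C) ((insRow b P).headD []) := by
  intro t
  have mono : (A ++ b :: C).countP (· < t) ≤ (A ++ v :: C).countP (· < t) := by
    simp only [List.countP_append, List.countP_cons]
    grind
  rcases countP_headD_insRow_le hP b t with hle | ⟨hbt, hle⟩
  · exact hle.trans ((h t).trans mono)
  refine hle.trans ?_
  have hb := h b
  have hzero : (b :: C).countP (· < b) = 0 := by
    obtain ⟨-, hbC, -⟩ := List.pairwise_append.mp hR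
    simpa [List.countP_eq_zero] using fun x => (List.pairwise_cons.mp hbC).1 x
  have hA : A.countP (· < b) ≤ A.countP (· < t) :=
    List.countP_mono_left fun x _ hx => by simp only [decide_eq_true_eq] at hx ⊢; omega
  simp only [List.countP_append, hzero] at hb
  simp only [List.countP_append, List.countP_cons, decide_eq_true_eq, hvb.trans_le hbt, if_true]
  omega

theorem isTableau_insRow (hP : IsTableau P) (v : ℕ) : IsTableau (insRow v P) := by
  induction P generalizing v with
  | nil => exact ⟨by simp, by simp, fun t => by simp, trivial⟩
  | cons R P ih =>
    obtain ⟨hne, hR, hRP, hP⟩ := hP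
    rcases forall_le_or_exists_split v R with hv | ⟨A, b, C, rfl, hA, hvb⟩
    · rw [insRow_of_forall_le hv]
      refine ⟨by simp, ?_, fun t => ?_, hP⟩
      · simpa [List.pairwise_append, hR] using hv
      · exact (hRP t).trans (by simp)
    · rw [insRow_of_lt hA hvb]
      refine ⟨by simp, ?_, strictlyAbove_insRow hRP hR hvb hP.pairwise_headD, ih hP b⟩
      simp only [List.pairwise_append, List.pairwise_cons, List.mem_cons] at hR ⊢
      obtain ⟨hAA, ⟨hbC, hCC⟩, hAC⟩ := hR
      refine ⟨hAA, ⟨fun c hc => hvb.le.trans (hbC c hc), hCC⟩, ?_⟩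
      rintro a ha c (rfl | hc)
      · exact hA a ha
      · exact hAC a ha c (.inr hc)

theorem knuthEquiv_rowWord_insRow (hP : IsTableau P) (v : ℕ) :
    KnuthEquiv (rowWord P ++ [v]) (rowWord (insRow v P)) := by
  induction P generalizing v with
  | nil => exact .refl _
  | cons R P ih =>
    obtain ⟨-, hR, -, hP⟩ := hP
    rcases forall_le_or_exists_split v R with hv | ⟨A, b, C, rfl, hA, hvb⟩
    · simpa only [insRow_of_forall_le hv, rowWord_cons, List.append_assoc] using .refl _
    · have hbump := (knuthEquiv_bump hR hA hvb).append_left (rowWord P)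
      have hrest := (ih hP b).append_right (A ++ v :: C)
      simpa [insRow_of_lt hA hvb, rowWord_cons] using hbump.trans (by simpa using hrest)

theorem Pword_append_singleton (w : List ℕ) (v : ℕ) : Pword (w ++ [v]) = insRow v (Pword w) := by
  simp [Pword]

theorem isTableau_Pword (w : List ℕ) : IsTableau (Pword w) := by
  induction w using List.reverseRecOn with
  | nil => trivial
  | append_singleton w v ih => exact Pword_append_singleton w v ▸ isTableau_insRow ih v

theorem knuthEquiv_rowWord_Pword (w : List ℕ) : KnuthEquiv w (rowWord (Pword w)) := by
  induction w using List.reverseRecOn with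
  | nil => exact .refl _
  | append_singleton w v ih =>
    rw [Pword_append_singleton]
    exact (ih.append_right [v]).trans (knuthEquiv_rowWord_insRow (isTableau_Pword w) v)

end Tableaux

section TableauLowering

variable {i x : ℕ} {P₁ P₂ T : List (List ℕ)} {A C S u v w : List ℕ}

theorem rowWord_append_cons (P₁ : List (List ℕ)) (R : List ℕ) (P₂ : List (List ℕ)) :
    rowWord (P₁ ++ R :: P₂) = rowWord P₂ ++ R ++ rowWord P₁ := by
  simp [rowWord]

theorem exists_rows_of_rowWord_eq (h : rowWord T = u ++ x :: v) : ∃ P₁ A C P₂,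
    T = P₁ ++ (A ++ x :: C) :: P₂ ∧ u = rowWord P₂ ++ A ∧ v = C ++ rowWord P₁ := by
  induction T generalizing v with
  | nil => simp [rowWord] at h
  | cons R P ih =>
    rw [rowWord_cons] at h
    rcases append_cons_eq_append h.symm with ⟨v, h', rfl⟩ | ⟨A, rfl, rfl⟩
    · obtain ⟨P₁, A, C, P₂, rfl, rfl, rfl⟩ := ih h'
      exact ⟨R :: P₁, A, C, P₂, rfl, rfl, by simp [rowWord_cons]⟩
    · exact ⟨[], A, v, P, rfl, rfl, by simp [rowWord]⟩

theorem rowWordBoxes_cons (R : List ℕ) (P : List (List ℕ)) : rowWordBoxes (R :: P) =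
    (rowWordBoxes P).map (Prod.map (· + 1) id) ++ (List.range R.length).map (0, ·) := by
  simp [rowWordBoxes, List.range_succ_eq_map, List.map_flatMap, List.flatMap_map,
    ← List.map_reverse, Function.comp_def]

theorem length_rowWordBoxes (P : List (List ℕ)) : (rowWordBoxes P).length = (rowWord P).length := by
  induction P with
  | nil => rfl
  | cons R P ih => simp [rowWordBoxes_cons, rowWord_cons, ih]

theorem getElem?_rowWordBoxes (P₁ : List (List ℕ)) (A : List ℕ) (x : ℕ) (C : List ℕ)
    (P₂ : List (List ℕ)) : (rowWordBoxes (P₁ ++ (A ++ x :: C) :: P₂))[(rowWord P₂ ++ A).length]? =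
      some (P₁.length, A.length) := by
  induction P₁ with
  | nil =>
    simp only [List.nil_append, rowWordBoxes_cons]
    rw [List.getElem?_append_right (by simp [length_rowWordBoxes])]
    simp [length_rowWordBoxes]
  | cons R P₁ ih =>
    rw [List.cons_append, rowWordBoxes_cons, List.getElem?_append_left, List.getElem?_map, ih]
    · rfl
    · simp only [List.length_map, length_rowWordBoxes, rowWord_append_cons, List.length_append,
        List.length_cons]
      omega

theorem countP_le_eq_add_count (l : List ℕ) (j : ℕ) :
    l.countP (· ≤ j) = l.countP (· < j) + l.count j := by
  induction l with
  | nil => rfl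
  | cons x l ih => simp only [List.countP_cons, List.count_cons, ih]; grind

/-- The bracketing bounds the number of letters `i + 1` in the row below by that of the letters `i`
before the one which is raised. -/
theorem strictlyAbove_lower (h : StrictlyAbove (A ++ i :: C) S)
    (hR : (A ++ i :: C).Pairwise (· ≤ ·)) (hS : S.Pairwise (· ≤ ·)) (hu : IsHighest i (S ++ A)) :
    StrictlyAbove (A ++ (i + 1) :: C) S := by
  obtain ⟨-, hiC, hAC⟩ := List.pairwise_append.mp hR
  have hSA : S.count (i + 1) ≤ A.count i := by
    have hS' : S.reverse.Pairwise fun x y => x = i → y ≠ i + 1 :=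
      List.pairwise_reverse.mpr (hS.imp fun h => by omega)
    have := (isHighest_append.mp hu).2.count_le_of_pairwise (by omega) hS'
    rw [List.count_reverse] at this
    omega
  intro t
  by_cases ht : t = i + 1
  · subst ht
    have hi := h i
    have hS_count := countP_le_eq_add_count S (i + 1)
    have hA_count := countP_le_eq_add_count A i
    have hA : A.countP (· ≤ i) = A.length := by
      simpa [List.countP_eq_length] using fun a ha => hAC a ha i (by simp)
    have hA' : A.countP (· < i + 1) = A.length := by simpa only [Nat.lt_succ_iff] using hA
    have hC : (i :: C).countP (· < i) = 0 := by
      simpa [List.countP_eq_zero] using (List.pairwise_cons.mp hiC).1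
    simp only [Nat.lt_succ_iff] at hS_count
    simp only [List.countP_append] at hi ⊢
    omega
  · refine (h t).trans (le_of_eq ?_)
    simp only [List.countP_append, List.countP_cons]
    grind

theorem isTableau_lower (hT : IsTableau (P₁ ++ (A ++ i :: C) :: P₂))
    (hu : IsHighest i (rowWord P₂ ++ A)) (hv : IsLowest i C) :
    IsTableau (P₁ ++ (A ++ (i + 1) :: C) :: P₂) := by
  induction P₁ with
  | nil =>
    obtain ⟨-, hR, hRP, hP⟩ := hT
    refine ⟨by simp, ?_, ?_, hP⟩
    · obtain ⟨hA, hC, hAC⟩ := List.pairwise_append.mp hR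
      obtain ⟨hiC, hC⟩ := List.pairwise_cons.mp hC
      have hC0 : C.count i = 0 :=
        Nat.le_zero.mp (Ballot.count_le_of_pairwise (by omega) hv (hC.imp fun h => by omega))
      have hne : ∀ c ∈ C, i + 1 ≤ c := fun c hc =>
        (hiC c hc).lt_of_ne fun h => List.count_eq_zero.mp hC0 (h ▸ hc)
      refine List.pairwise_append.mpr ⟨hA, List.pairwise_cons.mpr ⟨hne, hC⟩, fun a ha c hc => ?_⟩
      have hai := hAC a ha i (by simp)
      rcases List.mem_cons.mp hc with rfl | hc
      · omega
      · have := hne c hc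
        omega
    · refine strictlyAbove_lower hRP hR hP.pairwise_headD ?_
      cases P₂ with
      | nil => exact hu.of_suffix
      | cons S P₂ =>
        rw [rowWord_cons, List.append_assoc] at hu
        exact hu.of_suffix
  | cons R P₁ ih =>
    obtain ⟨hne, hR, hRP, hP⟩ := hT
    refine ⟨hne, hR, fun t => le_trans ?_ (hRP t), ih hP⟩
    cases P₁ with
    | nil =>
      change (A ++ (i + 1) :: C).countP _ ≤ (A ++ i :: C).countP _
      simp only [List.countP_append, List.countP_cons]
      grind
    | cons S P₁ => rfl

theorem fLower_eq_some (hu : IsHighest i (rowWord P₂ ++ A)) (hv : IsLowest i (C ++ rowWord P₁)) :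
    fLower i (P₁ ++ (A ++ i :: C) :: P₂) = some (P₁ ++ (A ++ (i + 1) :: C) :: P₂) := by
  have hw : rowWord (P₁ ++ (A ++ i :: C) :: P₂) = rowWord P₂ ++ A ++ i :: (C ++ rowWord P₁) := by
    simp [rowWord_append_cons]
  simp only [fLower, hw, rightUnmatched_eq_some hu hv, List.getD_eq_getElem?_getD,
    getElem?_rowWordBoxes]
  simp

theorem fLower_eq_none (h : IsLowest i (rowWord T)) : fLower i T = none := by
  simp [fLower, rightUnmatched_eq_none h]

theorem IsTableau.exists_fLower (hT : IsTableau T) (h : Lowers i (rowWord T) w) :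
    ∃ T', fLower i T = some T' ∧ IsTableau T' ∧ rowWord T' = w ∧
      T'.map List.length = T.map List.length := by
  generalize hw : rowWord T = w' at h
  obtain ⟨hu, hv⟩ := h
  obtain ⟨P₁, A, C, P₂, rfl, rfl, rfl⟩ := exists_rows_of_rowWord_eq hw
  exact ⟨_, fLower_eq_some hu hv, isTableau_lower hT hu hv.of_append,
    by simp [rowWord_append_cons], by simp⟩

end TableauLowering

section LowestTableaux

variable {M t : ℕ} {P T T' : List (List ℕ)} {R : List ℕ}

theorem countP_getD_le (hT : IsTableau T) (k t : ℕ) :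
    (T.getD k []).countP (· < t + k) ≤ (T.headD []).countP (· < t) := by
  induction T generalizing k t with
  | nil => simp
  | cons R P ih =>
    obtain ⟨-, -, hRP, hP⟩ := hT
    cases k with
    | zero => simp
    | succ k =>
      have := ih hP k (t + 1)
      simp only [Nat.lt_succ_iff] at this
      simpa [Nat.add_right_comm, Nat.add_assoc, Nat.add_comm 1] using this.trans (hRP t)

/-- The strict increase along columns gives one inequality, the bracketing the other one. -/
theorem countP_lt_eq_length_getD (hT : IsTableau (R :: P)) (hM : ∀ x ∈ rowWord (R :: P), x ≤ M)
    (hlow : ∀ i < M, IsLowest i (rowWord (R :: P)))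
    (hP : ∀ t ≤ M, (P.getD (M - t) []).length = (rowWord P).count t) {s k : ℕ}
    (hsk : s + k = M + 1) : R.countP (· < s) = ((R :: P).getD k []).length := by
  refine le_antisymm ?_ ?_
  · induction s generalizing k with
    | zero => simp
    | succ s ih =>
      rcases k with _ | k
      · exact List.countP_le_length
      have hs := hlow s (by omega)
      rw [rowWord_cons] at hs
      obtain ⟨hsP, hsR⟩ := isLowest_append.mp hs
      have hRs := hsR.count_le_of_pairwise (by omega) (hT.2.1.imp fun h => by omega)
      have := hsP.count_le
      have := hP s (by omega)
      have := hP (s + 1) (by omega)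
      have := ih (k := k + 2) (by omega)
      have := countP_le_eq_add_count R s
      simp_all only [List.getD_cons_succ, Nat.lt_succ_iff, show M - s = k + 1 by omega,
        show M - (s + 1) = k by omega]
      omega
  · have hk : ∀ x ∈ (R :: P).getD k [], x < s + k := by
      intro x hx
      refine hsk ▸ Nat.lt_succ_of_le (hM x ?_)
      rw [List.getD_eq_getElem?_getD] at hx
      obtain ⟨S, hS, hx⟩ : ∃ S, (R :: P)[k]? = some S ∧ x ∈ S := by
        cases h : (R :: P)[k]? <;> simp_all
      simpa only [rowWord, List.mem_flatMap, List.mem_reverse] using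
        ⟨S, List.mem_of_getElem? hS, hx⟩
    have := countP_getD_le hT k s
    rwa [List.countP_eq_length.mpr (by simpa using hk)] at this

theorem IsTableau.count_eq_of_isLowest (hT : IsTableau T) (hM : ∀ x ∈ rowWord T, x ≤ M)
    (hlow : ∀ i < M, IsLowest i (rowWord T)) (ht : t ≤ M) :
    (T.headD []).countP (· ≤ t) = (rowWord T).count t ∧
      (T.getD (M - t) []).length = (rowWord T).count t := by
  induction T generalizing t with
  | nil => simp [rowWord]
  | cons R P ih =>
    have hP : ∀ t ≤ M, (P.getD (M - t) []).length = (rowWord P).count t := fun t ht =>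
      (ih hT.2.2.2 (fun x hx => hM x (by simp [rowWord_cons, hx]))
        (fun i hi => (rowWord_cons R P ▸ hlow i hi).of_append) ht).2
    have hlen := countP_lt_eq_length_getD hT hM hlow hP (s := t + 1) (k := M - t) (by omega)
    have hnext := countP_lt_eq_length_getD hT hM hlow hP (s := t) (k := M - t + 1) (by omega)
    have := countP_le_eq_add_count R t
    simp only [Nat.lt_succ_iff, List.getD_cons_succ, hP t ht] at hlen hnext
    rw [rowWord_cons, List.count_append, List.headD_cons]
    omega

theorem eq_of_countP_le_eq {R R' : List ℕ} (hR : R.Pairwise (· ≤ ·)) (hR' : R'.Pairwise (· ≤ ·))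
    (h : ∀ t, R.countP (· ≤ t) = R'.countP (· ≤ t)) : R = R' := by
  refine List.Perm.eq_of_pairwise (fun a b _ _ => le_antisymm) hR hR' ?_
  refine List.perm_iff_count.mpr fun t => ?_
  have := h t
  have := countP_le_eq_add_count R t
  have := countP_le_eq_add_count R' t
  rcases t with _ | t
  · simp_all
  · have := h t
    simp only [Nat.lt_succ_iff] at *
    omega

theorem IsTableau.countP_headD_of_isLowest (hT : IsTableau T) (hM : ∀ x ∈ rowWord T, x ≤ M)
    (hlow : ∀ i < M, IsLowest i (rowWord T)) (t : ℕ) :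
    (T.headD []).countP (· ≤ t) = (rowWord T).count (min t M) := by
  rw [← (hT.count_eq_of_isLowest hM hlow (min_le_right t M)).1]
  refine List.countP_congr fun x hx => ?_
  have : x ∈ rowWord T := by
    cases T with
    | nil => simp at hx
    | cons R P => exact rowWord_cons R P ▸ List.mem_append_right _ hx
  simp [hM x this]

theorem IsTableau.eq_of_isLowest (hT : IsTableau T) (hT' : IsTableau T')
    (hperm : (rowWord T).Perm (rowWord T')) (hM : ∀ x ∈ rowWord T, x ≤ M)
    (hlow : ∀ i < M, IsLowest i (rowWord T)) (hlow' : ∀ i < M, IsLowest i (rowWord T')) :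
    T = T' := by
  induction T generalizing T' with
  | nil =>
    cases T' with
    | nil => rfl
    | cons R' P' => exact absurd (hperm.nil_eq ▸ rowWord_cons R' P') (by simp [hT'.1])
  | cons R P ih =>
    have hM' : ∀ x ∈ rowWord T', x ≤ M := fun x hx => hM x (hperm.mem_iff.mpr hx)
    have hRR' : R = T'.headD [] := eq_of_countP_le_eq hT.2.1 hT'.pairwise_headD fun t => by
      rw [hT'.countP_headD_of_isLowest hM' hlow', ← hperm.count_eq]
      exact hT.countP_headD_of_isLowest hM hlow t
    cases T' with
    | nil => exact absurd hRR' hT.1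
    | cons R' P' =>
      obtain rfl : R = R' := hRR'
      simp only [rowWord_cons] at hperm hM hlow hlow'
      rw [ih hT.2.2.2 hT'.2.2.2 ((List.perm_append_right_iff R).mp hperm)
        (fun x hx => hM x (by simp [hx])) (fun i hi => (hlow i hi).of_append)
        fun i hi => (hlow' i hi).of_append]

end LowestTableaux

section Uniqueness

variable {M i : ℕ} {T T' : List (List ℕ)} {w w' : List ℕ}

/-- Lowering letters at most `M` while some `f_i` with `i < M` applies increases the sum, so that
it stops. -/
@[elab_as_elim]
theorem lowering_induction {motive : List ℕ → Prop}
    (lowest : ∀ w, (∀ x ∈ w, x ≤ M) → (∀ i < M, IsLowest i w) → motive w)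
    (lowers : ∀ i w w', (∀ x ∈ w', x ≤ M) → Lowers i w w' → motive w' → motive w)
    (w : List ℕ) (hw : ∀ x ∈ w, x ≤ M) : motive w := by
  by_cases h : ∀ i < M, IsLowest i w
  · exact lowest w hw h
  push Not at h
  obtain ⟨i, hi, h⟩ := h
  obtain ⟨w', h⟩ := (isLowest_or_lowers i w).resolve_left h
  have hw' : ∀ x ∈ w', x ≤ M := fun x hx => by
    rcases List.mem_cons.mp (h.perm.subset (List.mem_cons_of_mem i hx)) with rfl | hx
    · exact hi
    · exact hw x hx
  have hlen := h.perm.length_eq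
  have hsum := h.perm.sum_eq
  have hle := List.sum_le_card_nsmul w' M hw'
  simp only [List.length_cons, List.sum_cons, smul_eq_mul] at hlen hsum hle
  have : M * w'.length - w'.sum < M * w.length - w.sum := by
    rw [Nat.mul_comm] at hle
    rw [← Nat.succ_injective hlen]
    omega
  exact lowers i w w' hw' h (lowering_induction lowest lowers w' hw')
termination_by M * w.length - w.sum

theorem eq_of_rowWord_eq (hlen : T.map List.length = T'.map List.length)
    (h : rowWord T = rowWord T') : T = T' := by
  induction T generalizing T' with
  | nil => simpa using hlen.symm
  | cons R P ih =>
    obtain ⟨R', P', rfl⟩ := List.exists_cons_of_ne_nil (show T' ≠ [] by rintro rfl; simp at hlen)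
    simp only [List.map_cons, List.cons.injEq] at hlen
    rw [rowWord_cons, rowWord_cons] at h
    obtain ⟨hP, rfl⟩ := List.append_inj' h hlen.1
    rw [ih hlen.2 hP]

theorem IsTableau.eq_of_knuthEquiv (hT : IsTableau T) (hT' : IsTableau T')
    (h : KnuthEquiv (rowWord T) (rowWord T')) : T = T' := by
  obtain ⟨M, hM⟩ : ∃ M, ∀ x ∈ rowWord T, x ≤ M :=
    ⟨_, fun x hx => List.single_le_sum (by simp) x hx⟩
  suffices ∀ w, (∀ x ∈ w, x ≤ M) → ∀ T T', IsTableau T → IsTableau T' → rowWord T = w →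
      KnuthEquiv w (rowWord T') → T = T' from this _ hM T T' hT hT' rfl h
  refine lowering_induction (fun w hM hlow => ?_) (fun i w w₁ _ hw₁ ih => ?_) <;>
    rintro T T' hT hT' rfl h
  · exact hT.eq_of_isLowest hT' h.perm hM hlow fun i hi => h.isLowest_iff.mp (hlow i hi)
  · obtain ⟨w₁', hw₁', h₁⟩ := h.exists_lowers hw₁
    obtain ⟨T₁, -, hT₁, rfl, hlen⟩ := hT.exists_fLower hw₁
    obtain ⟨T₁', -, hT₁', rfl, hlen'⟩ := hT'.exists_fLower hw₁'
    obtain rfl := ih _ _ hT₁ hT₁' rfl h₁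
    exact eq_of_rowWord_eq (hlen.symm.trans hlen') (hw₁.injective hw₁')

theorem Pword_eq_of_knuthEquiv (h : KnuthEquiv w w') : Pword w = Pword w' :=
  (isTableau_Pword w).eq_of_knuthEquiv (isTableau_Pword w')
    ((knuthEquiv_rowWord_Pword w).symm.trans (h.trans (knuthEquiv_rowWord_Pword w')))

theorem fLower_Pword_eq_none (h : IsLowest i w) : fLower i (Pword w) = none :=
  fLower_eq_none ((knuthEquiv_rowWord_Pword w).isLowest_iff.mp h)

theorem Lowers.fLower_Pword (h : Lowers i w w') : fLower i (Pword w) = some (Pword w') ∧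
    (Pword w').map List.length = (Pword w).map List.length := by
  obtain ⟨w₁, hw₁, h₁⟩ := (knuthEquiv_rowWord_Pword w).exists_lowers h
  obtain ⟨T, hfT, hT, rfl, hlen⟩ := (isTableau_Pword w).exists_fLower hw₁
  obtain rfl := (isTableau_Pword w').eq_of_knuthEquiv hT
    ((knuthEquiv_rowWord_Pword w').symm.trans h₁)
  exact ⟨hfT, hlen⟩

end Uniqueness

/-! ### The recording tableau -/

section RecordingTableau

variable {M i k : ℕ} {B B₁ B₂ : List (ℕ × ℕ)} {w : List ℕ}

theorem rsk_append_singleton (B : List (ℕ × ℕ)) (p : ℕ × ℕ) : rsk (B ++ [p]) =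
    (insRow p.2 (rsk B).1,
      addBox (rsk B).2 (growIdx (rsk B).1 (insRow p.2 (rsk B).1)) p.1) := by
  simp [rsk]

theorem rsk_fst (B : List (ℕ × ℕ)) : (rsk B).1 = Pword (B.map Prod.snd) := by
  induction B using List.reverseRecOn with
  | nil => rfl
  | append_singleton B p ih => simp [rsk_append_singleton, ih, Pword_append_singleton]

theorem rsk_snd_append_singleton (B : List (ℕ × ℕ)) (p : ℕ × ℕ) : (rsk (B ++ [p])).2 =
    addBox (rsk B).2 (growIdx (Pword (B.map Prod.snd)) (Pword (B.map Prod.snd ++ [p.2]))) p.1 := by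
  rw [rsk_append_singleton, rsk_fst, Pword_append_singleton]

theorem growIdx_congr {P P' S S' : List (List ℕ)} (h : P.map List.length = S.map List.length)
    (h' : P'.map List.length = S'.map List.length) : growIdx P P' = growIdx S S' := by
  have getD_length (T : List (List ℕ)) (r : ℕ) :
      (T.getD r []).length = (T.map List.length).getD r 0 := by
    rw [← List.length_nil (α := ℕ), List.getD_map]
  have hlen : P'.length = S'.length := by simpa using congrArg List.length h'
  simp only [growIdx, getD_length, h, h', hlen]

theorem rsk_snd_lower (hu : IsHighest i (B₁.map Prod.snd)) (hv : IsLowest i (B₂.map Prod.snd)) :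
    (rsk (B₁ ++ (k, i) :: B₂)).2 = (rsk (B₁ ++ (k, i + 1) :: B₂)).2 := by
  induction B₂ using List.reverseRecOn with
  | nil =>
    rw [rsk_snd_append_singleton, rsk_snd_append_singleton]
    exact congrArg (addBox _ · k) (growIdx_congr rfl (Lowers.mk hu hv).fLower_Pword.2.symm)
  | append_singleton B₂ p ih =>
    rw [List.map_append] at hv
    have shape := (Lowers.mk hu hv.of_append).fLower_Pword.2
    have shape' := (Lowers.mk hu hv).fLower_Pword.2
    simp only [← List.cons_append, ← List.append_assoc, rsk_snd_append_singleton]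
    rw [ih hv.of_append]
    refine congrArg (addBox _ · p.1) (growIdx_congr ?_ ?_)
    · simpa using shape.symm
    · simpa using shape'.symm

theorem length_getD_Pword (hM : ∀ x ∈ w, x ≤ M) (hlow : ∀ i < M, IsLowest i w) {t r : ℕ}
    (htr : t + r = M) : ((Pword w).getD r []).length = w.count t := by
  have h := knuthEquiv_rowWord_Pword w
  have hlen := ((isTableau_Pword w).count_eq_of_isLowest (t := t)
    (fun x hx => hM x (h.perm.mem_iff.mpr hx))
    (fun i hi => h.isLowest_iff.mp (hlow i hi)) (by omega)).2
  rwa [h.perm.count_eq, show r = M - t by omega]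

theorem growIdx_Pword {b r : ℕ} (hM : ∀ x ∈ w ++ [b], x ≤ M)
    (hlow : ∀ i < M, IsLowest i (w ++ [b])) (hbr : b + r = M) :
    growIdx (Pword w) (Pword (w ++ [b])) = r := by
  have length_old {t s : ℕ} (h : t + s = M) : ((Pword w).getD s []).length = w.count t :=
    length_getD_Pword (fun x hx => hM x (by simp [hx])) (fun i hi => (hlow i hi).of_append) h
  have length_new {t s : ℕ} (h : t + s = M) :
      ((Pword (w ++ [b])).getD s []).length = w.count t + [b].count t := by
    rw [length_getD_Pword hM hlow h, List.count_append]
  have hr : r < (Pword (w ++ [b])).length := by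
    by_contra h
    have := length_new hbr
    rw [List.getD_eq_default _ _ (not_lt.mp h)] at this
    simp at this
  rw [growIdx, List.findIdx_eq (by simpa using hr)]
  refine ⟨by simp [-List.getD_eq_getElem?_getD, length_old hbr, length_new hbr], fun s hs => ?_⟩
  have hsM : M - s + s = M := by omega
  have hsb : [b].count (M - s) = 0 := List.count_eq_zero.mpr (by rw [List.mem_singleton]; omega)
  simp [-List.getD_eq_getElem?_getD, length_old hsM, length_new hsM, hsb]

theorem getD_addBox {Q : List (List ℕ)} {r : ℕ} (hr : r ≤ Q.length) (a s : ℕ) :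
    (addBox Q r a).getD s [] = Q.getD s [] ++ if s = r then [a] else [] := by
  grind [addBox]

theorem getD_rsk_snd (hM : ∀ p ∈ B, p.2 ≤ M) (hlow : ∀ i < M, IsLowest i (B.map Prod.snd))
    (r : ℕ) : (rsk B).2.getD r [] = (B.filter (·.2 + r = M)).map Prod.fst := by
  induction B using List.reverseRecOn generalizing r with
  | nil => rfl
  | append_singleton B p ih =>
    simp only [List.map_append, List.map_singleton] at hlow
    replace ih := ih (fun q hq => hM q (by simp [hq])) fun i hi => (hlow i hi).of_append
    have hp : p.2 ≤ M := hM p (by simp)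
    have hrow : M - p.2 ≤ (rsk B).2.length := by
      rcases hp.eq_or_lt with h | h
      · simp [h]
      by_contra! hlt
      have hcount := (hlow p.2 h).count_le
      have hnil := ih (M - (p.2 + 1))
      rw [List.getD_eq_default _ _ (by omega), eq_comm, List.map_eq_nil_iff,
        List.filter_eq_nil_iff] at hnil
      have hnext : (B.map Prod.snd).count (p.2 + 1) = 0 := by
        rw [List.count_eq_zero, List.mem_map]
        rintro ⟨q, hq, hqp⟩
        exact hnil q hq (by simp only [decide_eq_true_eq]; omega)
      simp only [List.count_append, List.count_singleton_self, hnext] at hcount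
      simp at hcount
    have hword : ∀ x ∈ B.map Prod.snd ++ [p.2], x ≤ M := by
      rw [← List.map_singleton (f := Prod.snd), ← List.map_append]
      exact List.forall_mem_map.mpr hM
    rw [rsk_snd_append_singleton, growIdx_Pword hword hlow (Nat.add_sub_of_le hp),
      getD_addBox hrow, ih r, List.filter_append, List.map_append]
    grind

end RecordingTableau

section Transposition

variable {c : ℕ} {C D R : List ℕ} {P Q Q' cols : List (List ℕ)}

theorem filterMap_eq_of_getD_eq {f : List ℕ → Option ℕ} (hf : f [] = none)
    (h : ∀ r, Q.getD r [] = Q'.getD r []) : Q.filterMap f = Q'.filterMap f := by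
  induction Q generalizing Q' with
  | nil =>
    refine (List.filterMap_eq_nil_iff.mpr fun R hR => ?_).symm
    obtain ⟨r, hr, rfl⟩ := List.mem_iff_getElem.mp hR
    rw [← List.getD_eq_getElem _ [] hr, ← h r, List.getD_nil, hf]
  | cons R Q ih =>
    have htail := fun r => h (r + 1)
    cases Q' with
    | nil => simpa [show R = [] from h 0, hf] using ih (Q' := []) htail
    | cons R' Q' =>
      obtain rfl : R = R' := h 0
      simp only [List.filterMap_cons, ih htail]

theorem transposeT_congr (h : ∀ r, Q.getD r [] = Q'.getD r []) : transposeT Q = transposeT Q' := by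
  rw [transposeT, transposeT, h 0]
  exact List.map_congr_left fun c _ => filterMap_eq_of_getD_eq rfl h

theorem transposeT_cons (c : ℕ) (C : List ℕ) (cols : List (List ℕ)) :
    transposeT ((c :: C) :: cols) = ((c :: C) :: cols).filterMap List.head? ::
      transposeT (((c :: C) :: cols).map List.tail) := by
  have tail_getElem? (k : ℕ) (D : List ℕ) : D.tail[k]? = D[k + 1]? := by simp
  simp only [transposeT, List.getD_cons_zero, List.length_cons, List.range_succ_eq_map,
    List.head?_eq_getElem?]
  simp only [List.map_cons, List.map_map, List.getD_cons_zero, List.length_tail]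
  simp only [← List.map_cons, List.filterMap_map, Function.comp_def, tail_getElem?]
  rfl

theorem Pword_append_reverse (w C : List ℕ) :
    Pword (w ++ C.reverse) = C.foldr insRow (Pword w) := by
  simp [Pword, List.foldl_append, List.foldl_reverse]

theorem foldr_insRow_nil (hC : (c :: C).Pairwise (· < ·)) :
    (c :: C).foldr insRow [] = [c] :: C.foldr insRow [] := by
  induction C generalizing c with
  | nil => rfl
  | cons d C ih =>
    rw [List.foldr_cons, ih hC.of_cons, ← List.nil_append [d],
      insRow_of_lt (by simp) (List.rel_of_pairwise_cons hC (by simp))]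
    exact congrArg _ (ih hC.of_cons)

theorem foldr_insRow_cons (hR : ∀ x ∈ R, x ≤ c) (hC : (c :: C).Pairwise (· < ·)) :
    (c :: C).foldr insRow (R :: P) = (R ++ [c]) :: C.foldr insRow P := by
  induction C generalizing c with
  | nil => exact insRow_of_forall_le hR P
  | cons d C ih =>
    have hcd : c < d := List.rel_of_pairwise_cons hC (by simp)
    rw [List.foldr_cons, ih (fun x hx => (hR x hx).trans hcd.le) hC.of_cons,
      insRow_of_lt hR hcd, List.foldr_cons]

/-- The order of columns in a tableau: `C` may stand to the left of `D`. The entrywise comparison is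
expressed by counting entries, which also takes care of the lengths. -/
def ColumnLE (C D : List ℕ) : Prop := ∀ t, D.countP (· ≤ t) ≤ C.countP (· ≤ t)

theorem ColumnLE.tail (h : ColumnLE C D) (hC : C.Pairwise (· < ·)) (hD : D.Pairwise (· < ·)) :
    ColumnLE C.tail D.tail := by
  have countP_tail {C : List ℕ} (hC : C.Pairwise (· < ·)) (t : ℕ) :
      C.tail.countP (· ≤ t) = C.countP (· ≤ t) - 1 := by
    cases C with
    | nil => rfl
    | cons c C =>
      rw [List.tail_cons, List.countP_cons]
      by_cases hc : c ≤ t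
      · simp [hc]
      have hC : C.countP (· ≤ t) = 0 := by
        have hcC := (List.pairwise_cons.mp hC).1
        simpa [List.countP_eq_zero] using fun x hx => (not_le.mp hc).trans (hcC x hx)
      simp [hC, hc]
  intro t
  rw [countP_tail hC, countP_tail hD]
  exact Nat.sub_le_sub_right (h t) 1

theorem Pword_flatMap_reverse_cons (hcols : ((c :: C) :: cols).Pairwise ColumnLE)
    (hlt : ∀ D ∈ (c :: C) :: cols, D.Pairwise (· < ·)) :
    Pword (((c :: C) :: cols).flatMap List.reverse) = ((c :: C) :: cols).filterMap List.head? ::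
      Pword ((((c :: C) :: cols).map List.tail).flatMap List.reverse) := by
  induction cols using List.reverseRecOn with
  | nil =>
    have Pword_reverse (C : List ℕ) : Pword C.reverse = C.foldr insRow [] :=
      Pword_append_reverse [] C
    simp only [List.flatMap_singleton, List.map_singleton, List.tail_cons, Pword_reverse]
    exact foldr_insRow_nil (hlt (c :: C) (by simp))
  | append_singleton cols D ih =>
    rw [← List.cons_append] at hcols hlt ⊢
    obtain ⟨hcols, -, hD⟩ := List.pairwise_append.mp hcols
    have ih := ih hcols fun E hE => hlt E (List.mem_append_left _ hE)
    cases D with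
    | nil => simpa [show [[]].filterMap List.head? = ([] : List ℕ) from rfl] using ih
    | cons d D =>
      have hd : ∀ x ∈ ((c :: C) :: cols).filterMap List.head?, x ≤ d := by
        intro x hx
        obtain ⟨E, hE, hxE⟩ := List.mem_filterMap.mp hx
        obtain ⟨E, rfl⟩ := List.head?_eq_some_iff.mp hxE
        have hcount := hD _ hE _ (List.mem_singleton_self _) d
        obtain ⟨y, hy, hyd⟩ := List.countP_pos_iff.mp
          ((List.countP_pos_iff.mpr ⟨d, by simp, by simp⟩).trans_le hcount)
        rcases List.mem_cons.mp hy with rfl | hyE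
        · simpa using hyd
        · exact (List.rel_of_pairwise_cons (hlt _ (List.mem_append_left _ hE)) hyE).le.trans
            (by simpa using hyd)
      have hword := foldr_insRow_cons (P := Pword ((((c :: C) :: cols).map List.tail).flatMap
        List.reverse)) hd (hlt (d :: D) (by simp))
      rw [← ih] at hword
      simp only [List.flatMap_append, List.flatMap_singleton, Pword_append_reverse, hword,
        List.map_append, List.filterMap_append, List.map_singleton, List.tail_cons]
      rfl

theorem Pword_flatMap_reverse (hcols : cols.Pairwise ColumnLE)
    (hlt : ∀ D ∈ cols, D.Pairwise (· < ·)) :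
    Pword (cols.flatMap List.reverse) = transposeT cols := by
  generalize hn : (cols.getD 0 []).length = n
  induction n generalizing cols with
  | zero =>
    have hnil : ∀ D ∈ cols, D = [] := by
      cases cols with
      | nil => simp
      | cons C cols =>
        obtain rfl : C = [] := List.length_eq_zero_iff.mp hn
        have hD : ∀ D ∈ cols, D = [] := fun D hD =>
          List.eq_nil_iff_forall_not_mem.mpr fun x hx =>
            (List.countP_pos_iff.mpr ⟨x, hx, by simp⟩).not_ge
              (List.rel_of_pairwise_cons hcols hD x)
        simpa using hD
    rw [transposeT, hn, List.flatMap_eq_nil_iff.mpr (by simpa using hnil)]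
    rfl
  | succ n ih =>
    rcases cols with _ | ⟨_ | ⟨c, C⟩, cols⟩
    · simp at hn
    · simp at hn
    · rw [Pword_flatMap_reverse_cons hcols hlt, transposeT_cons, ih _ _ (by simpa using hn)]
      · exact List.pairwise_map.mpr (hcols.imp_of_mem fun hC hD h => h.tail (hlt _ hC) (hlt _ hD))
      · exact List.forall_mem_map.mpr fun D hD => (hlt D hD).tail

end Transposition

/-! ### The dual word of a biword -/

section Biwords

variable {κ : Type*} {i m x : ℕ} {k : κ} {B B₁ B₂ : List (κ × ℕ)}

/-- The keys of the letter `x` in a biword. -/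
def column (x : ℕ) (B : List (κ × ℕ)) : List κ := (B.filter (·.2 = x)).map Prod.fst

/-- The word dual to the bottom row of a biword with letters in `{1, …, m}`: the keys of each
letter in reverse, the letters being taken in decreasing order. -/
def dualWord (m : ℕ) (B : List (κ × ℕ)) : List κ :=
  (List.range m).reverse.flatMap fun x => (column (x + 1) B).reverse

theorem column_append : column x (B₁ ++ B₂) = column x B₁ ++ column x B₂ := by
  simp [column]

theorem column_cons_self : column x ((k, x) :: B) = k :: column x B := by
  simp [column]

theorem column_cons_of_ne {y : ℕ} (h : y ≠ x) : column x ((k, y) :: B) = column x B := by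
  simp [column, h]

theorem dualWord_succ (m : ℕ) (B : List (κ × ℕ)) :
    dualWord (m + 1) B = (column (m + 1) B).reverse ++ dualWord m B := by
  simp [dualWord, List.range_succ]

theorem dualWord_cons_of_lt (hm : m < i) :
    dualWord m (B₁ ++ (k, i) :: B₂) = dualWord m (B₁ ++ B₂) := by
  induction m with
  | zero => rfl
  | succ m ih =>
    rw [dualWord_succ, dualWord_succ, ih (by omega), column_append, column_append,
      column_cons_of_ne hm.ne']

theorem countP_column (f : κ → Bool) (x : ℕ) (B : List (κ × ℕ)) :
    (column x B).countP f = ((B.filter (f ·.1)).map Prod.snd).count x := by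
  simp [column, List.count, List.countP_map, List.countP_filter, Function.comp_def,
    Bool.and_comm, beq_eq_decide]

theorem Lowers.exists_eq_append_cons {w : List ℕ} (h : Lowers i (B.map Prod.snd) w) :
    ∃ B₁ k B₂, B = B₁ ++ (k, i) :: B₂ ∧ w = (B₁ ++ (k, i + 1) :: B₂).map Prod.snd ∧
      IsHighest i (B₁.map Prod.snd) ∧ IsLowest i (B₂.map Prod.snd) := by
  generalize hB : B.map Prod.snd = w₀ at h
  obtain ⟨hu, hv⟩ := h
  obtain ⟨B₁, _, rfl, rfl, hB₂⟩ := List.map_eq_append_iff.mp hB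
  obtain ⟨⟨k, _⟩, B₂, rfl, rfl, rfl⟩ := List.map_eq_cons_iff.mp hB₂
  exact ⟨B₁, k, B₂, rfl, by simp, hu, hv⟩

variable [LinearOrder κ]

/-- The strict order in which a Burge word lists its biletters: the keys increase, and the letters
with a common key decrease. -/
def BurgeLT (p q : κ × ℕ) : Prop := p.1 < q.1 ∨ p.1 = q.1 ∧ q.2 < p.2

theorem pairwise_column (hB : B.Pairwise fun p q => p.2 = q.2 → p.1 < q.1) (x : ℕ) :
    (column x B).Pairwise (· < ·) := by
  refine List.pairwise_map.mpr ((hB.filter _).imp_of_mem fun {p q} hp hq h => ?_)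
  simp only [List.mem_filter, decide_eq_true_eq] at hp hq
  exact h (hp.2.trans hq.2.symm)

theorem dualWord_eq_of_perm (h : B₁.Perm B₂) (m : ℕ)
    (h₁ : B₁.Pairwise fun p q => p.2 = q.2 → p.1 < q.1)
    (h₂ : B₂.Pairwise fun p q => p.2 = q.2 → p.1 < q.1) : dualWord m B₁ = dualWord m B₂ := by
  have hcol (x : ℕ) : column x B₁ = column x B₂ :=
    ((h.filter _).map Prod.fst).eq_of_pairwise' (pairwise_column h₁ x) (pairwise_column h₂ x)
  simp only [dualWord, hcol]

theorem BurgeLT.fst_lt {p q : κ × ℕ} (h : BurgeLT p q) (hpq : p.2 = q.2) : p.1 < q.1 :=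
  h.resolve_right fun h => h.2.ne' hpq

theorem BurgeLT.fst_le {p q : κ × ℕ} (h : BurgeLT p q) : p.1 ≤ q.1 :=
  h.elim le_of_lt fun h => h.1.le

instance : Std.Asymm (BurgeLT (κ := κ)) where
  asymm p q := by
    rintro (h | ⟨h, h'⟩) (g | ⟨g, g'⟩)
    · exact h.asymm g
    · exact h.ne' g
    · exact g.ne' h
    · exact h'.asymm g'

theorem filter_append_filter_not (hB : B.Pairwise BurgeLT) {f : κ → Bool} (hf : Antitone f) :
    B.filter (f ·.1) ++ B.filter (!f ·.1) = B := by
  induction B with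
  | nil => rfl
  | cons p B ih =>
    rw [List.pairwise_cons] at hB
    cases hp : f p.1 with
    | true => simp [hp, ih hB.2]
    | false =>
      have hq : ∀ q ∈ B, f q.1 = false := fun q hq =>
        eq_bot_mono (hf (hB.1 q hq).fst_le) hp
      have hnil : B.filter (f ·.1) = [] := by simpa using hq
      have hself : B.filter (!f ·.1) = B := by simpa using hq
      simp [hp, hnil, hself]

theorem IsLowest.countP_column_le (h : IsLowest i (B.map Prod.snd)) (hB : B.Pairwise BurgeLT)
    (t : κ) : (column i B).countP (· ≤ t) ≤ (column (i + 1) B).countP (· ≤ t) := by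
  have hf : Antitone fun s : κ => decide (s ≤ t) := fun a b hab => by
    simpa [Bool.le_iff_imp] using hab.trans
  rw [← filter_append_filter_not hB hf, List.map_append] at h
  simpa only [countP_column, add_zero] using h.of_append.count_le

theorem IsHighest.countP_column_le (h : IsHighest i (B.map Prod.snd)) (hB : B.Pairwise BurgeLT)
    (t : κ) : (column (i + 1) B).countP (t ≤ ·) ≤ (column i B).countP (t ≤ ·) := by
  have hf : Antitone fun s : κ => decide (s < t) := fun a b hab => by
    simpa [Bool.le_iff_imp] using hab.trans_lt
  rw [← filter_append_filter_not hB hf, List.map_append] at h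
  simpa only [countP_column, ← decide_not, not_lt] using h.of_suffix.count_le

theorem pairwise_burgeLT_lower (hB : (B₁ ++ (k, i) :: B₂).Pairwise BurgeLT)
    (h : IsHighest i (B₁.map Prod.snd)) : (B₁ ++ (k, i + 1) :: B₂).Pairwise BurgeLT := by
  obtain ⟨h₁, h₂, h₁₂⟩ := List.pairwise_append.mp hB
  rw [List.pairwise_cons] at h₂
  refine List.pairwise_append.mpr ⟨h₁, List.pairwise_cons.mpr ⟨fun q hq => ?_, h₂.2⟩, ?_⟩
  · exact (h₂.1 q hq).imp_right fun h => ⟨h.1, h.2.trans (Nat.lt_succ_self i)⟩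
  intro p hp q hq
  rcases List.mem_cons.mp hq with rfl | hq
  · refine (h₁₂ p hp (k, i) (by simp)).imp_right fun ⟨hk, hi⟩ =>
      ⟨hk, lt_of_le_of_ne hi fun hp' => ?_⟩
    dsimp only at hk hp'
    have hcount := (h.countP_column_le h₁ k).trans' <| Nat.succ_le_of_lt <|
      List.countP_pos_iff.mpr ⟨p.1, by simpa [column, hp'] using hp, by simp [hk]⟩
    obtain ⟨k', hk', hkk'⟩ := List.countP_pos_iff.mp hcount
    have hmem : (k', i) ∈ B₁ := by simpa [column] using hk'
    have hlt : k' < k := (h₁₂ _ hmem (k, i) (by simp)).resolve_right fun h => h.2.false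
    exact hlt.not_ge (of_decide_eq_true hkk')
  · exact h₁₂ p hp q (by simp [hq])

theorem knuthEquiv_dualWord_lower (hi : 1 ≤ i) (him : i < m)
    (hB : (B₁ ++ (k, i) :: B₂).Pairwise BurgeLT)
    (hu : IsHighest i (B₁.map Prod.snd)) (hv : IsLowest i (B₂.map Prod.snd)) :
    KnuthEquiv (dualWord m (B₁ ++ (k, i) :: B₂)) (dualWord m (B₁ ++ (k, i + 1) :: B₂)) := by
  induction m, him using Nat.le_induction with
  | base =>
    obtain ⟨i, rfl⟩ := Nat.exists_eq_add_of_le' hi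
    have hB' := pairwise_burgeLT_lower hB hu
    have h₁ := hB.sublist (List.sublist_append_left _ _)
    have h₂ := (List.pairwise_cons.mp (hB.sublist (List.sublist_append_right _ _))).2
    have move := knuthEquiv_move_between_columns (c := k) (x₁ := (column (i + 1 + 1) B₂).reverse)
      (x₂ := (column (i + 1 + 1) B₁).reverse) (y₁ := (column (i + 1) B₂).reverse)
      (y₂ := (column (i + 1) B₁).reverse)
      (by simpa [column_append, column_cons_self] using
        List.pairwise_reverse.mpr (pairwise_column (hB'.imp BurgeLT.fst_lt) (i + 1 + 1)))
      (by simpa [column_append, column_cons_self] using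
        List.pairwise_reverse.mpr (pairwise_column (hB.imp BurgeLT.fst_lt) (i + 1)))
      (by simpa using hv.countP_column_le h₂) (by simpa using hu.countP_column_le h₁)
    have move := (move.append_right (dualWord i (B₁ ++ B₂))).symm
    simpa [dualWord_succ, dualWord_cons_of_lt, column_append, column_cons_self,
      column_cons_of_ne] using move
  | succ m him ih =>
    rw [dualWord_succ, dualWord_succ, column_append, column_append,
      column_cons_of_ne (by omega), column_cons_of_ne (by omega)]
    exact ih.append_left _

end Biwords

section Symmetry

variable {m x y : ℕ} {B : List (ℕ × ℕ)}

theorem columnLE_column (hB : B.Pairwise BurgeLT) (hlow : ∀ i < m, IsLowest i (B.map Prod.snd))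
    (hyx : y ≤ x) (hxm : x ≤ m) : ColumnLE (column x B) (column y B) := by
  induction x, hyx using Nat.le_induction with
  | base => exact fun t => le_rfl
  | succ x _ ih => exact fun t => (ih (by omega) t).trans ((hlow x hxm).countP_column_le hB t)

theorem dualWord_eq_flatMap (m : ℕ) (B : List (ℕ × ℕ)) : dualWord m B =
    ((List.range m).map fun r => column (m - r) B).flatMap List.reverse := by
  rw [dualWord, List.range_eq_range', List.reverse_range', ← List.range_eq_range',
    List.flatMap_map, List.flatMap_map]
  refine List.flatMap_congr fun r hr => ?_
  have := List.mem_range.mp hr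
  rw [show 0 + m - 1 - r + 1 = m - r by omega]

theorem Pword_dualWord_of_isLowest (hB : B.Pairwise BurgeLT)
    (hBm : ∀ p ∈ B, 1 ≤ p.2 ∧ p.2 ≤ m) (hlow : ∀ i < m, IsLowest i (B.map Prod.snd)) :
    Pword (dualWord m B) = transposeT (rsk B).2 := by
  rw [dualWord_eq_flatMap, Pword_flatMap_reverse]
  · refine transposeT_congr fun r => ?_
    rw [getD_rsk_snd (fun p hp => (hBm p hp).2) hlow]
    rcases lt_or_ge r m with hr | hr
    · simp only [List.getD_eq_getElem?_getD, List.getElem?_map, List.getElem?_range hr,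
        Option.map_some, Option.getD_some, column]
      congr! 4 with p
      omega
    · rw [List.getD_eq_default _ _ (by simpa using hr), eq_comm, List.map_eq_nil_iff,
        List.filter_eq_nil_iff]
      intro p hp
      have := (hBm p hp).1
      simp only [decide_eq_true_eq]
      omega
  · exact List.pairwise_map.mpr (List.pairwise_lt_range.imp fun hrs =>
      columnLE_column hB hlow (Nat.sub_le_sub_left hrs.le m) (Nat.sub_le _ _))
  · exact List.forall_mem_map.mpr fun r _ => pairwise_column (hB.imp BurgeLT.fst_lt) _

/-- The symmetry of the Burge correspondence. Lowering a letter changes neither side, which leaves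
the case where the tableaux are known explicitly. -/
theorem Pword_dualWord (hB : B.Pairwise BurgeLT) (hBm : ∀ p ∈ B, 1 ≤ p.2 ∧ p.2 ≤ m) :
    Pword (dualWord m B) = transposeT (rsk B).2 := by
  suffices ∀ w, (∀ x ∈ w, x ≤ m) → ∀ B : List (ℕ × ℕ), B.map Prod.snd = w → B.Pairwise BurgeLT →
      (∀ p ∈ B, 1 ≤ p.2 ∧ p.2 ≤ m) → Pword (dualWord m B) = transposeT (rsk B).2 from
    this _ (List.forall_mem_map.mpr fun p hp => (hBm p hp).2) B rfl hB hBm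
  clear! B
  refine lowering_induction (fun w _ hlow => ?_) (fun i w w' hw' hlower ih => ?_)
  · rintro B rfl hB hBm
    exact Pword_dualWord_of_isLowest hB hBm hlow
  · rintro B rfl hB hBm
    obtain ⟨B₁, k, B₂, rfl, rfl, hu, hv⟩ := hlower.exists_eq_append_cons
    have hi : 1 ≤ i := (hBm (k, i) (by simp)).1
    have him : i < m := hw' (i + 1) (by simp)
    rw [Pword_eq_of_knuthEquiv (knuthEquiv_dualWord_lower hi him hB hu hv), rsk_snd_lower hu hv]
    refine ih _ rfl (pairwise_burgeLT_lower hB hu) fun p hp => ?_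
    rcases List.mem_append.mp hp with hp | hp
    · exact hBm p (by simp [hp])
    rcases List.mem_cons.mp hp with rfl | hp
    · exact ⟨Nat.succ_pos _, him⟩
    · exact hBm p (by simp [hp])

end Symmetry

open OrderDual

/-! ### Single-column bitableaux -/

section Readings

variable {n m r : ℕ} {L B : List (ℕ × ℕ)}

/-- The companion of the Burge word for `u'(T)`: the boxes are grouped by second coordinate, in
decreasing order, and listed from the bottom of the column to the top within each group. -/
def dualBurge (m : ℕ) (L : List (ℕ × ℕ)) : List (ℕ × ℕ) :=
  (List.range m).reverse.flatMap fun k => (L.filter fun p => decide (p.2 = k + 1)).reverse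

/-- Exchanges the coordinates of a box, reversing the order on the second one; this turns
`dualBurge` into a biword listed in the order `BurgeLT`. -/
def flipBox (p : ℕ × ℕ) : ℕᵒᵈ × ℕ := (toDual p.2, p.1)

theorem flipBox_injective : Function.Injective flipBox := by
  rintro ⟨a, b⟩ ⟨c, d⟩ h
  simpa [flipBox, and_comm] using h

theorem pairwise_of_isColBitab (hL : IsColBitab n m r L) : L.Pairwise lexLt := by
  have : IsTrans (ℕ × ℕ) lexLt := ⟨fun p q s => by unfold lexLt; omega⟩
  exact List.isChain_iff_pairwise.mp hL.2.2

theorem nodup_of_isColBitab (hL : IsColBitab n m r L) : L.Nodup :=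
  (pairwise_of_isColBitab hL).imp fun {p q} h => by
    rintro rfl
    unfold lexLt at h
    omega

theorem pairwise_burge (n : ℕ) (hL : L.Pairwise lexLt) : (burge n L).Pairwise BurgeLT := by
  refine List.pairwise_flatMap.mpr
    ⟨fun k _ => ?_, List.pairwise_lt_range.imp fun hk p hp q hq => ?_⟩
  · refine List.pairwise_reverse.mpr ((hL.filter _).imp_of_mem fun hp hq h => ?_)
    simp only [List.mem_filter, decide_eq_true_eq] at hp hq
    unfold lexLt at h
    unfold BurgeLT
    omega
  · simp only [List.mem_reverse, List.mem_filter, decide_eq_true_eq] at hp hq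
    unfold BurgeLT
    omega

theorem pairwise_dualBurge (m : ℕ) (hL : L.Pairwise lexLt) :
    ((dualBurge m L).map flipBox).Pairwise BurgeLT := by
  refine List.pairwise_map.mpr (List.pairwise_flatMap.mpr
    ⟨fun k _ => ?_, List.pairwise_reverse.mpr (List.pairwise_lt_range.imp fun hk p hp q hq => ?_)⟩)
  · refine List.pairwise_reverse.mpr ((hL.filter _).imp_of_mem fun hp hq h => ?_)
    simp only [List.mem_filter, decide_eq_true_eq] at hp hq
    unfold lexLt at h
    simp only [BurgeLT, flipBox, toDual_lt_toDual, toDual_inj]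
    omega
  · simp only [List.mem_reverse, List.mem_filter, decide_eq_true_eq] at hp hq
    simp only [BurgeLT, flipBox, toDual_lt_toDual, toDual_inj]
    omega

theorem perm_burge (hL : IsColBitab n m r L) : (burge n L).Perm L := by
  refine (List.perm_ext_iff_of_nodup (pairwise_burge n (pairwise_of_isColBitab hL)).nodup
    (nodup_of_isColBitab hL)).mpr fun p => ?_
  simp only [burge, List.mem_flatMap, List.mem_range, List.mem_reverse, List.mem_filter,
    decide_eq_true_eq]
  refine ⟨fun ⟨_, _, hp, _⟩ => hp, fun hp => ?_⟩
  obtain ⟨h₁, hn⟩ := (hL.2.1 p hp).1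
  exact ⟨p.1 - 1, by omega, hp, by omega⟩

theorem perm_dualBurge (hL : IsColBitab n m r L) : (dualBurge m L).Perm L := by
  refine (List.perm_ext_iff_of_nodup (pairwise_dualBurge m (pairwise_of_isColBitab hL)).nodup.of_map
    (nodup_of_isColBitab hL)).mpr fun p => ?_
  simp only [dualBurge, List.mem_flatMap, List.mem_range, List.mem_reverse, List.mem_filter,
    decide_eq_true_eq]
  refine ⟨fun ⟨_, _, hp, _⟩ => hp, fun hp => ?_⟩
  obtain ⟨h₁, hm⟩ := (hL.2.1 p hp).2
  exact ⟨p.2 - 1, by omega, hp, by omega⟩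

theorem burge_eq_of_perm (hL : IsColBitab n m r L) (hB : B.Pairwise BurgeLT)
    (h : L.Perm B) : burge n L = B :=
  ((perm_burge hL).trans h).eq_of_pairwise' (pairwise_burge n (pairwise_of_isColBitab hL)) hB

theorem dualBurge_eq_of_perm (hL : IsColBitab n m r L)
    (hB : (B.map flipBox).Pairwise BurgeLT) (h : L.Perm B) : dualBurge m L = B :=
  flipBox_injective.list_map ((((perm_dualBurge hL).trans h).map _).eq_of_pairwise'
    (pairwise_dualBurge m (pairwise_of_isColBitab hL)) hB)

theorem wCol_eq_map (n : ℕ) (L : List (ℕ × ℕ)) : wCol n L = (burge n L).map Prod.snd := by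
  rw [burge, List.map_flatMap, wCol]

theorem uCol'_eq_map (m : ℕ) (L : List (ℕ × ℕ)) :
    uCol' m L = ((dualBurge m L).map flipBox).map Prod.snd := by
  rw [dualBurge, List.map_flatMap, List.map_flatMap, uCol']
  simp only [List.map_map]
  rfl

theorem uCol'_eq_dualWord (hL : IsColBitab n m r L) :
    uCol' m L = dualWord m (burge n L) := by
  rw [dualWord_eq_of_perm (perm_burge hL) m
    ((pairwise_burge n (pairwise_of_isColBitab hL)).imp BurgeLT.fst_lt)
    ((pairwise_of_isColBitab hL).imp fun h => by unfold lexLt at h; omega)]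
  simp only [uCol', dualWord, column, List.map_reverse]

theorem wCol_eq_dualWord (hL : IsColBitab n m r L) :
    wCol n L = (dualWord n ((dualBurge m L).map flipBox)).reverse.map ofDual := by
  have hperm : ((dualBurge m L).map flipBox).Perm (L.map flipBox).reverse :=
    ((perm_dualBurge hL).map _).trans (List.reverse_perm _).symm
  rw [dualWord_eq_of_perm hperm n
    ((pairwise_dualBurge m (pairwise_of_isColBitab hL)).imp BurgeLT.fst_lt)]
  · simp only [dualWord, column, wCol, List.reverse_flatMap, List.map_flatMap, List.filter_reverse]
    simp only [List.map_reverse, List.filter_map, Function.comp_def, flipBox, List.map_map,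
      List.reverse_reverse, ofDual_toDual]
    rfl
  · refine List.pairwise_reverse.mpr (List.pairwise_map.mpr ((pairwise_of_isColBitab hL).imp ?_))
    intro p q h hpq
    unfold lexLt at h
    simp only [flipBox, toDual_lt_toDual] at hpq ⊢
    omega

theorem bRSK_eq (hL : IsColBitab n m r L) :
    bRSK n L = (Pword (wCol n L), Pword (uCol' m L)) := by
  rw [uCol'_eq_dualWord hL, Pword_dualWord (pairwise_burge n (pairwise_of_isColBitab hL))
    fun p hp => (hL.2.1 p ((perm_burge hL).mem_iff.mp hp)).2, wCol_eq_map, bRSK, rsk_fst]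

end Readings

section Operators

variable {n m r i j : ℕ} {L : List (ℕ × ℕ)}

theorem map_getD_filter_range {α : Type*} (f : α → Bool) (L : List α) (d : α) :
    ((List.range L.length).filter fun t => f (L.getD t d)).map (L.getD · d) = L.filter f := by
  have hL : (List.range L.length).map (L.getD · d) = L :=
    List.ext_getElem (by simp) fun t _ ht => by simp [ht]
  conv_rhs => rw [← hL, List.filter_map]
  rfl

theorem map_getD_wColIdx (n : ℕ) (L : List (ℕ × ℕ)) :
    (wColIdx n L).map (L.getD · (0, 0)) = burge n L := by
  simp only [wColIdx, burge, List.map_flatMap, List.map_reverse]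
  exact List.flatMap_congr fun k _ => congrArg List.reverse
    (map_getD_filter_range (fun p => decide (p.1 = k + 1)) L (0, 0))

theorem map_getD_uColIdx' (m : ℕ) (L : List (ℕ × ℕ)) :
    (uColIdx' m L).map (L.getD · (0, 0)) = dualBurge m L := by
  simp only [uColIdx', dualBurge, List.map_flatMap, List.map_reverse]
  exact List.flatMap_congr fun k _ => congrArg List.reverse
    (map_getD_filter_range (fun p => decide (p.2 = k + 1)) L (0, 0))

theorem exists_perm_set {α : Type*} {I : List ℕ} {L A₁ A₂ : List α} {p d : α}
    (hIL : ∀ t ∈ I, t < L.length) (hI : I.map (L.getD · d) = A₁ ++ p :: A₂)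
    (hA : L.Perm (A₁ ++ p :: A₂)) : L.getD (I.getD A₁.length 0) d = p ∧
      ∀ q, (L.set (I.getD A₁.length 0) q).Perm (A₁ ++ q :: A₂) := by
  obtain ⟨I₁, _, rfl, rfl, hI₂⟩ := List.map_eq_append_iff.mp hI
  obtain ⟨t, I₂, rfl, rfl, rfl⟩ := List.map_eq_cons_iff.mp hI₂
  have ht : t < L.length := hIL t (by simp)
  have hindex : (I₁ ++ t :: I₂).getD (I₁.map (L.getD · d)).length 0 = t := by simp
  rw [hindex]
  refine ⟨rfl, fun q => (List.set_perm_cons_eraseIdx ht q).trans ?_⟩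
  have hrest := (List.getElem_cons_eraseIdx_perm ht).trans (hA.trans List.perm_middle)
  rw [List.getD_eq_getElem _ _ ht] at hrest
  exact (hrest.cons_inv.cons q).trans List.perm_middle.symm

theorem isColBitab_sortLex_set (hL : IsColBitab n m r L) {t : ℕ} {q : ℕ × ℕ}
    (hq : (1 ≤ q.1 ∧ q.1 ≤ n) ∧ 1 ≤ q.2 ∧ q.2 ≤ m) (hnodup : (L.set t q).Nodup) :
    IsColBitab n m r (sortLex (L.set t q)) := by
  have hperm : (sortLex (L.set t q)).Perm (L.set t q) := List.perm_insertionSort _ _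
  refine ⟨by rw [hperm.length_eq, List.length_set, hL.1], fun p hp => ?_, ?_⟩
  · rcases List.mem_or_eq_of_mem_set (hperm.mem_iff.mp hp) with hp | rfl
    exacts [hL.2.1 p hp, hq]
  have htotal : Std.Total lexLe := ⟨fun p q => by unfold lexLe; omega⟩
  have htrans : IsTrans (ℕ × ℕ) lexLe := ⟨fun p q s => by unfold lexLe; omega⟩
  have hsorted := List.pairwise_insertionSort lexLe (L.set t q)
  refine (List.Pairwise.imp₂ (fun {p s} hps hne => ?_) hsorted (hperm.nodup_iff.mpr hnodup)).isChain
  have hne : ¬ (p.1 = s.1 ∧ p.2 = s.2) := fun h => hne (Prod.ext h.1 h.2)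
  unfold lexLe at hps
  unfold lexLt
  omega

theorem exists_FbotCol (hL : IsColBitab n m r L) (hi : 1 ≤ i) (him : i < m) {w : List ℕ}
    (h : Lowers i (wCol n L) w) : ∃ L', FbotCol n i L = some L' ∧ IsColBitab n m r L' ∧
      Lowers i (wCol n L) (wCol n L') ∧ KnuthEquiv (uCol' m L) (uCol' m L') := by
  have hB := pairwise_burge n (pairwise_of_isColBitab hL)
  have hI := map_getD_wColIdx n L
  have hperm := (perm_burge hL).symm
  rw [wCol_eq_map] at h
  obtain ⟨B₁, k, B₂, hBL, -, hu, hv⟩ := h.exists_eq_append_cons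
  rw [hBL] at hB hI hperm
  obtain ⟨ht, hset⟩ := exists_perm_set (by simp +contextual [wColIdx]) hI hperm
  have hB' := pairwise_burgeLT_lower hB hu
  set L' := sortLex (L.set ((wColIdx n L).getD B₁.length 0) (k, i + 1)) with hL'
  have hcol : IsColBitab n m r L' := isColBitab_sortLex_set hL
    ⟨(hL.2.1 (k, i) (hperm.mem_iff.mpr (by simp))).1, Nat.succ_pos i, him⟩
    ((hset _).nodup_iff.mpr hB'.nodup)
  have hburge : burge n L' = B₁ ++ (k, i + 1) :: B₂ :=
    burge_eq_of_perm hcol hB' ((List.perm_insertionSort _ _).trans (hset _))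
  refine ⟨L', ?_, hcol, ?_, ?_⟩
  · rw [FbotCol, wCol_eq_map, hBL, List.map_append, List.map_cons, rightUnmatched_eq_some hu hv]
    simp only [List.length_map, ht, hL']
  · simpa [wCol_eq_map, hburge, hBL] using Lowers.mk hu hv
  · rw [uCol'_eq_dualWord hL, uCol'_eq_dualWord hcol, hBL, hburge]
    exact knuthEquiv_dualWord_lower hi him hB hu hv

theorem exists_FtopCol (hL : IsColBitab n m r L) (hj : 1 ≤ j) (hjn : j < n) {w : List ℕ}
    (h : Lowers j (uCol' m L) w) : ∃ L', FtopCol m j L = some L' ∧ IsColBitab n m r L' ∧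
      KnuthEquiv (wCol n L) (wCol n L') ∧ Lowers j (uCol' m L) (uCol' m L') := by
  have hV := pairwise_dualBurge m (pairwise_of_isColBitab hL)
  have hI := map_getD_uColIdx' m L
  have hperm := (perm_dualBurge hL).symm
  rw [uCol'_eq_map] at h
  obtain ⟨V₁, k, V₂, hVL, -, hu, hv⟩ := h.exists_eq_append_cons
  obtain ⟨B₁, _, hBL, rfl, hB₂⟩ := List.map_eq_append_iff.mp hVL
  obtain ⟨⟨a, b⟩, B₂, rfl, hflip, rfl⟩ := List.map_eq_cons_iff.mp hB₂
  obtain rfl : a = j := congrArg Prod.snd hflip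
  rw [hVL, ← hflip] at hV
  rw [hBL] at hI hperm
  obtain ⟨ht, hset⟩ := exists_perm_set (by simp +contextual [uColIdx']) hI hperm
  have hV' : ((B₁ ++ (a + 1, b) :: B₂).map flipBox).Pairwise BurgeLT := by
    simpa only [List.map_append, List.map_cons, flipBox] using pairwise_burgeLT_lower hV hu
  set L' := sortLex (L.set ((uColIdx' m L).getD B₁.length 0) (a + 1, b)) with hL'
  have hcol : IsColBitab n m r L' := isColBitab_sortLex_set hL
    ⟨⟨Nat.succ_pos a, hjn⟩, (hL.2.1 (a, b) (hperm.mem_iff.mpr (by simp))).2⟩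
    ((hset _).nodup_iff.mpr hV'.nodup.of_map)
  have hdual : dualBurge m L' = B₁ ++ (a + 1, b) :: B₂ :=
    dualBurge_eq_of_perm hcol hV' ((List.perm_insertionSort _ _).trans (hset _))
  have huL : uCol' m L = (B₁.map flipBox).map Prod.snd ++ a :: (B₂.map flipBox).map Prod.snd := by
    rw [uCol'_eq_map, hBL, List.map_append, List.map_cons, List.map_append, List.map_cons, flipBox]
  refine ⟨L', ?_, hcol, ?_, ?_⟩
  · rw [FtopCol, huL, rightUnmatched_eq_some hu hv]
    simp only [List.length_map, ht, hL']
  · rw [wCol_eq_dualWord hL, wCol_eq_dualWord hcol, hBL, hdual, List.map_append, List.map_append]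
    exact (knuthEquiv_dualWord_lower hj hjn hV hu hv).reverse_map fun _ _ h => h
  · rw [huL, uCol'_eq_map, hdual, List.map_append, List.map_append]
    exact Lowers.mk hu hv

theorem rel_FbotCol_fLower (hL : IsColBitab n m r L) (hi : 1 ≤ i) (him : i < m) :
    Option.Rel (fun L' P' => IsColBitab n m r L' ∧ bRSK n L' = (P', (bRSK n L).2))
      (FbotCol n i L) (fLower i (bRSK n L).1) := by
  rw [bRSK_eq hL]
  rcases isLowest_or_lowers i (wCol n L) with hlow | ⟨w, hw⟩
  · rw [FbotCol, rightUnmatched_eq_none hlow, fLower_Pword_eq_none hlow]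
    exact .none
  · obtain ⟨L', hF, hcol, hlower, hknuth⟩ := exists_FbotCol hL hi him hw
    rw [hF, hlower.fLower_Pword.1]
    exact .some ⟨hcol, by rw [bRSK_eq hcol, Pword_eq_of_knuthEquiv hknuth]⟩

theorem rel_FtopCol_fLower (hL : IsColBitab n m r L) (hj : 1 ≤ j) (hjn : j < n) :
    Option.Rel (fun L' Q' => IsColBitab n m r L' ∧ bRSK n L' = ((bRSK n L).1, Q'))
      (FtopCol m j L) (fLower j (bRSK n L).2) := by
  rw [bRSK_eq hL]
  rcases isLowest_or_lowers j (uCol' m L) with hlow | ⟨w, hw⟩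
  · rw [FtopCol, rightUnmatched_eq_none hlow, fLower_Pword_eq_none hlow]
    exact .none
  · obtain ⟨L', hF, hcol, hknuth, hlower⟩ := exists_FtopCol hL hj hjn hw
    rw [hF, hlower.fLower_Pword.1]
    exact .some ⟨hcol, by rw [bRSK_eq hcol, Pword_eq_of_knuthEquiv hknuth]⟩

theorem isSome_iff_of_rel {α β : Type*} {R : α → β → Prop} {x : Option α} {y : Option β}
    (h : Option.Rel R x y) : x.isSome ↔ y.isSome := by
  cases h <;> simp

theorem exists_of_rel {α β : Type*} {R : α → β → Prop} {x : Option α} {y : Option β} {a : α}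
    (h : Option.Rel R x y) (hx : x = some a) : ∃ b, y = some b ∧ R a b := by
  subst hx
  cases h with
  | some hab => exact ⟨_, rfl, hab⟩

end Operators

end BurgeCrystal

open BurgeCrystal

/-- Burge insertion intertwines the crystal lowering operators on
single-column bitableaux with the standard tableau lowering operators: with
`(P, Q') = bRSK(T)`, `F_i^b(T)` is defined iff `f_i(P)` is, in which case
`F_i^b(T) ∈ B_{(1^r)}(n,m)` and `bRSK(F_i^b(T)) = (f_i(P), Q')`; and `F_j^t(T)` is defined
iff `f_j(Q')` is, in which case `F_j^t(T) ∈ B_{(1^r)}(n,m)` and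
`bRSK(F_j^t(T)) = (P, f_j(Q'))`. (Thus `bRSK` is an isomorphism of `gl_n × gl_m`-crystals on
single-column bitableaux.) -/
theorem stmt_11 (n m r : ℕ) (hn : 1 ≤ n) (hm : 1 ≤ m)
    (L : List (ℕ × ℕ)) (hL : IsColBitab n m r L)
    (i : ℕ) (hi1 : 1 ≤ i) (hi2 : i ≤ m - 1)
    (j : ℕ) (hj1 : 1 ≤ j) (hj2 : j ≤ n - 1) :
    ((FbotCol n i L).isSome ↔ (fLower i (bRSK n L).1).isSome) ∧
    (∀ L', FbotCol n i L = some L' →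
      IsColBitab n m r L' ∧
      ∃ P', fLower i (bRSK n L).1 = some P' ∧ bRSK n L' = (P', (bRSK n L).2)) ∧
    ((FtopCol m j L).isSome ↔ (fLower j (bRSK n L).2).isSome) ∧
    (∀ L', FtopCol m j L = some L' →
      IsColBitab n m r L' ∧
      ∃ Q', fLower j (bRSK n L).2 = some Q' ∧ bRSK n L' = ((bRSK n L).1, Q')) := by
  have hbot := rel_FbotCol_fLower hL hi1 (show i < m by omega)
  have htop := rel_FtopCol_fLower hL hj1 (show j < n by omega)
  refine ⟨isSome_iff_of_rel hbot, fun L' hL' => ?_, isSome_iff_of_rel htop, fun L' hL' => ?_⟩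
  · obtain ⟨P', hP', hcol, hbRSK⟩ := exists_of_rel hbot hL'
    exact ⟨hcol, P', hP', hbRSK⟩
  · obtain ⟨Q', hQ', hcol, hbRSK⟩ := exists_of_rel htop hL'
    exact ⟨hcol, Q', hQ', hbRSK⟩
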